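/- arXiv:2211.09417 — 4 statements merged into one kernel-verified Lean document; each statement's English description precedes it below -/
import Mathlib

section
/- For positive integers α, β and n, let N_{α,β}(n) denote the number of distinct factors of w_{α,β}^ω having length n and minimal period α+β, and let H_{α,β}(n) denote the number of such factors that are heavy. Let σ = β/(α+β) and let α' (respectively β') be the multiplicative inverse of α (respectively β) modulo α+β, taken in {1,…,α+β−1}. Then: H_{α,β}(n) = 0 if N_{α,β}(n) = 0; H_{α,β}(n) = 2·(Σ_{i=0}^{n−α−β} (⌈σ(n−i)⌉ + ⌊σi⌋)) − ⌊σn⌋·N_{α,β}(n) if gcd(α,β)=1 and α+β ≤ n < α+β+min{α',β'}; H_{α,β}(n) = (Σ_{i=0}^{n−α'} (⌊σ(n−i)⌋ + ⌈σi⌉)) − ⌊σn⌋·N_{α,β}(n) if gcd(α,β)=1 and α+β+β' ≤ n < α+β+α'; H_{α,β}(n) = (Σ_{i=0}^{n−β'} (⌈σ(n−i)⌉ + ⌊σi⌋)) − ⌊σn⌋·N_{α,β}(n) if gcd(α,β)=1 and α+β+α' ≤ n < α+β+β'; and H_{α,β}(n) = nβ mod (α+β) if gcd(α,β)=1 and n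 ≥ α+β+max{α',β'}. -/
/-- The lower Christoffel word `w_{a,b}`: the binary word of length `a+b` whose
`k`-th letter (1-based) is `⌊kb/(a+b)⌋ - ⌊(k-1)b/(a+b)⌋` (with `false = 0`, `true = 1`). -/
def lowerChristoffel (a b : ℕ) : List Bool :=
  (List.range (a + b)).map fun i => decide ((i + 1) * b / (a + b) ≠ i * b / (a + b))

/-- The upper Christoffel word `W_{a,b}`: the binary word of length `a+b` whose
`k`-th letter is `⌈kb/(a+b)⌉ - ⌈(k-1)b/(a+b)⌉`. -/
def upperChristoffel (a b : ℕ) : List Bool :=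
  (List.range (a + b)).map fun i =>
    decide (((i + 1) * b + (a + b) - 1) / (a + b) ≠ (i * b + (a + b) - 1) / (a + b))

/-- `p` is a period of `w`: `p` is positive and `w_i = w_{i+p}` for all valid indices. -/
def HasPeriod (w : List Bool) (p : ℕ) : Prop :=
  0 < p ∧ ∀ i, i + p < w.length → w.getD i false = w.getD (i + p) false

/-- A central word: a binary word with two coprime periods `p`, `q` and length `p + q - 2`. -/
def IsCentral (w : List Bool) : Prop :=
  ∃ p q : ℕ, Nat.Coprime p q ∧ HasPeriod w p ∧ HasPeriod w q ∧ w.length + 2 = p + q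

/-- A binary word is balanced if any two factors of the same length have numbers of `1`s
differing by at most `1`. -/
def BalancedWord (w : List Bool) : Prop :=
  ∀ u v : List Bool, u <:+: w → v <:+: w → u.length = v.length →
    |(u.count true : ℤ) - (v.count true : ℤ)| ≤ 1

/-- `w^m`: the `m`-th power of the word `w`. -/
def wpow (w : List Bool) (m : ℕ) : List Bool := (List.replicate m w).flatten

/-- A word is primitive if it is not a proper power. -/
def IsPrimitiveWord (w : List Bool) : Prop := ¬ ∃ (v : List Bool) (m : ℕ), 2 ≤ m ∧ w = wpow v m

/-- A Lyndon word: a nonempty primitive word lexicographically strictly smaller than all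
of its proper nonempty suffixes (for the order `0 < 1`, i.e. `false < true`). -/
def IsLyndonWord (w : List Bool) : Prop :=
  w ≠ [] ∧ IsPrimitiveWord w ∧
    ∀ u v : List Bool, w = u ++ v → u ≠ [] → v ≠ [] → List.Lex (· < ·) w v

/-- `p` is the minimal period of `w`. -/
def IsMinPeriod (w : List Bool) (p : ℕ) : Prop :=
  HasPeriod w p ∧ ∀ q : ℕ, HasPeriod w q → p ≤ q

/-- `u` is a factor of the infinite periodic word `w^ω`. -/
def IsOmegaFactor (u w : List Bool) : Prop := ∃ m : ℕ, u <:+: wpow w m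

/-- A primitive Christoffel word: a lower or upper Christoffel word `w_{a,b}` with
`gcd(a,b) = 1`. -/
def IsPrimitiveChristoffel (c : List Bool) : Prop :=
  ∃ a b : ℕ, Nat.Coprime a b ∧ (c = lowerChristoffel a b ∨ c = upperChristoffel a b)

/-- `N_{α,β}(n)`: the number of distinct factors of `w_{α,β}^ω` of length `n` and minimal
period `α + β`. -/
noncomputable def NFactors (α β n : ℕ) : ℕ :=
  Set.ncard {u : List Bool |
    IsOmegaFactor u (lowerChristoffel α β) ∧ u.length = n ∧ IsMinPeriod u (α + β)}

/-- `H_{α,β}(n)`: the number of distinct heavy factors of `w_{α,β}^ω` of length `n` and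
minimal period `α + β` (heavy: `⌊nβ/(α+β)⌋ + 1` occurrences of `1`). -/
noncomputable def HFactors (α β n : ℕ) : ℕ :=
  Set.ncard {u : List Bool |
    IsOmegaFactor u (lowerChristoffel α β) ∧ u.length = n ∧ IsMinPeriod u (α + β) ∧
      u.count true = n * β / (α + β) + 1}

/-- Letter of the bi-infinite periodic Christoffel word, slope `b / L`. -/
def SS (b L k : ℤ) : Bool := decide ((k + 1) * b / L ≠ k * b / L)

/-- Window of length `n` starting at `j`. -/
def UU (b L : ℤ) (n : ℕ) (j : ℤ) : List Bool := (List.range n).map fun i : ℕ => SS b L (j + (i : ℤ))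

/-- Number of ones in the window. -/
def CC (b L n j : ℤ) : ℤ := (j + n) * b / L - j * b / L

theorem UU_length (b L : ℤ) (n : ℕ) (j : ℤ) : (UU b L n j).length = n := by simp [UU]

theorem UU_getD (b L : ℤ) (n : ℕ) (j : ℤ) (i : ℕ) (h : i < n) :
    (UU b L n j).getD i false = SS b L (j + i) := by
  simp [UU, List.getD, h]

theorem UU_succ (b L : ℤ) (n : ℕ) (j : ℤ) : UU b L (n+1) j = UU b L n j ++ [SS b L (j + n)] := by
  simp [UU, List.range_succ]

theorem UU_period (b L : ℤ) (n : ℕ) (j : ℤ) (q : ℕ) :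
    HasPeriod (UU b L n j) q ↔ 0 < q ∧ ∀ i : ℕ, i + q < n → SS b L (j + i) = SS b L (j + i + q) := by
  unfold HasPeriod
  rw [UU_length]
  refine and_congr Iff.rfl (forall_congr' fun i => ?_)
  refine forall_congr' fun h => ?_
  rw [UU_getD _ _ _ _ _ (by omega), UU_getD _ _ _ _ _ h]
  push_cast
  rw [add_assoc]

theorem SS_step (b L k : ℤ) (hb : 0 ≤ b) (hL : 0 < L) (hbL : b ≤ L) :
    (k + 1) * b / L = k * b / L + (if SS b L k = true then 1 else 0) := by
  have h1 := Int.emod_add_mul_ediv (k * b) L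
  have h2 := Int.emod_nonneg (k * b) hL.ne'
  have h3 := Int.emod_lt_of_pos (k * b) hL
  have h4 : (k + 1) * b = (k * b % L + b) + L * (k * b / L) := by linarith
  have h5 : (k + 1) * b / L = (k * b % L + b) / L + k * b / L := by
    rw [h4, Int.add_mul_ediv_left _ _ hL.ne']
  have h6 : (k * b % L + b) / L = 0 ∨ (k * b % L + b) / L = 1 := by
    have : 0 ≤ (k * b % L + b) / L := Int.ediv_nonneg (by omega) hL.le
    have : (k * b % L + b) / L < 2 := Int.ediv_lt_of_lt_mul hL (by omega)
    omega
  by_cases h : (k + 1) * b / L = k * b / L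
  · simp [SS, h]
  · simp only [SS, ne_eq, h, not_false_eq_true, decide_true, if_true]
    omega

theorem UU_count (b L : ℤ) (hb : 0 ≤ b) (hL : 0 < L) (hbL : b ≤ L) (n : ℕ) (j : ℤ) :
    ((UU b L n j).count true : ℤ) = CC b L n j := by
  induction n with
  | zero => simp [UU, CC]
  | succ n ih =>
    rw [UU_succ, List.count_append]
    push_cast
    rw [ih]
    have := SS_step b L (j + n) hb hL hbL
    unfold CC
    rw [← add_assoc, this]
    cases SS b L (j + n) <;> simp; ring

theorem SS_add_mul (b L k m : ℤ) (hL : L ≠ 0) : SS b L (k + L * m) = SS b L k := by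
  unfold SS
  have h1 : (k + L * m + 1) * b = (k + 1) * b + L * (m * b) := by ring
  have h2 : (k + L * m) * b = k * b + L * (m * b) := by ring
  rw [h1, h2, Int.add_mul_ediv_left _ _ hL, Int.add_mul_ediv_left _ _ hL]
  simp

theorem CC_add_mul (b L n k m : ℤ) (hL : L ≠ 0) : CC b L n (k + L * m) = CC b L n k := by
  unfold CC
  have h1 : (k + L * m + n) * b = (k + n) * b + L * (m * b) := by ring
  have h2 : (k + L * m) * b = k * b + L * (m * b) := by ring
  rw [h1, h2, Int.add_mul_ediv_left _ _ hL, Int.add_mul_ediv_left _ _ hL]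
  ring

theorem CC_emod (b L n k : ℤ) (hL : L ≠ 0) : CC b L n (k % L) = CC b L n k := by
  conv_rhs => rw [← Int.emod_add_mul_ediv k L]
  rw [CC_add_mul _ _ _ _ _ hL]

theorem UU_add_mul (b L : ℤ) (n : ℕ) (k m : ℤ) (hL : L ≠ 0) :
    UU b L n (k + L * m) = UU b L n k := by
  unfold UU
  refine List.map_congr_left fun i _ => ?_
  rw [show k + L * m + (i : ℤ) = k + i + L * m by ring, SS_add_mul _ _ _ _ hL]

theorem UU_emod (b L : ℤ) (n : ℕ) (k : ℤ) (hL : L ≠ 0) : UU b L n (k % L) = UU b L n k := by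
  conv_rhs => rw [← Int.emod_add_mul_ediv k L]
  rw [UU_add_mul _ _ _ _ _ hL]

/-- floor division arithmetic -/
theorem ediv_pred (L x : ℤ) (hL : 0 < L) : (x - 1) / L = -((-x) / L) - 1 := by
  have h1 := Int.emod_add_mul_ediv (-x) L
  have h2 := Int.emod_nonneg (-x) hL.ne'
  have h3 := Int.emod_lt_of_pos (-x) hL
  rw [show x - 1 = (L - 1 - (-x) % L) + L * (-((-x) / L) - 1) by linarith,
    Int.add_mul_ediv_left _ _ hL.ne', Int.ediv_eq_zero_of_lt (by omega) (by omega)]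
  ring

theorem ediv_neg_of_not_dvd (L x : ℤ) (hL : 0 < L) (h : ¬ L ∣ x) : (-x) / L = -(x / L) - 1 := by
  have h1 := Int.emod_add_mul_ediv x L
  have h2 := Int.emod_nonneg x hL.ne'
  have h3 := Int.emod_lt_of_pos x hL
  have h4 : x % L ≠ 0 := fun h5 => h (Int.dvd_of_emod_eq_zero h5)
  rw [show -x = (L - x % L) + L * (-(x / L) - 1) by linarith,
    Int.add_mul_ediv_left _ _ hL.ne', Int.ediv_eq_zero_of_lt (by omega) (by omega)]
  ring

/-- The blocks starting at `j` with `j b ≡ 0` or `-1` are unbordered. -/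
theorem unbordered (b L j : ℤ) (q : ℕ) (hb : 0 ≤ b) (hL : 0 < L) (hbL : b ≤ L)
    (hcop : IsCoprime L b)
    (hq : 0 < q) (hqL : (q : ℤ) < L) (hj : L ∣ j * b ∨ L ∣ j * b + 1)
    (h : ∀ i : ℕ, (i : ℤ) + q < L → SS b L (j + i) = SS b L (j + i + q)) : False := by
  obtain ⟨m, hm⟩ : ∃ m : ℕ, (m : ℤ) + q = L := ⟨(L - q).toNat, by omega⟩
  have hU : UU b L m j = UU b L m (j + q) := by
    unfold UU
    refine List.map_congr_left fun i hi => ?_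
    rw [List.mem_range] at hi
    rw [h i (by omega)]
    congr 1; ring
  have hC : CC b L m j = CC b L m (j + q) := by
    rw [← UU_count b L hb hL hbL, ← UU_count b L hb hL hbL, hU]
  have hnd : ¬ L ∣ (q : ℤ) * b := by
    intro hd
    have := hcop.dvd_of_dvd_mul_right hd
    have := Int.le_of_dvd (by omega) this
    omega
  unfold CC at hC
  have hm' : (m : ℤ) = L - q := by omega
  rw [hm', show (j + q + (L - q)) * b = j * b + L * b by ring,
    show (j + (L - q)) * b = j * b - q * b + L * b by ring,
    Int.add_mul_ediv_left _ _ hL.ne', Int.add_mul_ediv_left _ _ hL.ne',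
    show (j + q) * b = j * b + q * b by ring] at hC
  rcases hj with ⟨e, he⟩ | ⟨e, he⟩
  · rw [he, show L * e - q * b = -(q * b) + L * e by ring,
      show L * e + q * b = (q * b) + L * e by ring, Int.add_mul_ediv_left _ _ hL.ne',
      Int.add_mul_ediv_left _ _ hL.ne', Int.mul_ediv_cancel_left _ hL.ne',
      ediv_neg_of_not_dvd _ _ hL hnd] at hC
    omega
  · have he' : j * b = -1 + L * e := by omega
    rw [he', show -1 + L * e - q * b = (-(q * b) - 1) + L * e by ring,
      show -1 + L * e + q * b = (q * b - 1) + L * e by ring, Int.add_mul_ediv_left _ _ hL.ne',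
      Int.add_mul_ediv_left _ _ hL.ne', Int.add_mul_ediv_left _ _ hL.ne', ediv_pred _ _ hL,
      ediv_pred _ _ hL, neg_neg, ediv_neg_of_not_dvd _ _ hL hnd] at hC
    have : (-1 : ℤ) / L = -1 := by
      have := ediv_pred L 0 hL
      simpa using this
    omega

/-- Shifting by `a'` preserves the letter except at positions `0, -1`. -/
theorem SS_shift (b L k a : ℤ) (hb : 0 < b) (hL : 0 < L) (hbL : b < L) (hcop : IsCoprime L b)
    (ha : L ∣ a * b + 1) (h0 : ¬ L ∣ k) (h1 : ¬ L ∣ k + 1) : SS b L k = SS b L (k + a) := by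
  obtain ⟨e, he⟩ := ha
  have hn0 : ¬ L ∣ k * b := fun h => h0 (hcop.dvd_of_dvd_mul_right h)
  have hn1 : ¬ L ∣ (k + 1) * b := fun h => h1 (hcop.dvd_of_dvd_mul_right h)
  have key : ∀ x, ¬ L ∣ x → (x - 1) / L = x / L := by
    intro x hx
    rw [ediv_pred _ _ hL, ediv_neg_of_not_dvd _ _ hL hx]; ring
  unfold SS
  have e1 : (k + a + 1) * b = ((k + 1) * b - 1) + L * e := by linarith
  have e2 : (k + a) * b = (k * b - 1) + L * e := by linarith
  rw [e1, e2, Int.add_mul_ediv_left _ _ hL.ne', Int.add_mul_ediv_left _ _ hL.ne',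
    key _ hn0, key _ hn1]
  simp

/-- Good starting positions. -/
def GoodPos (L c : ℤ) (n : ℕ) (j : ℤ) : Prop :=
  ∃ i : ℤ, 0 ≤ i ∧ i ≤ n - L ∧ (L ∣ j + i ∨ L ∣ j + c + i)

theorem minPeriod_iff (b : ℤ) (L : ℕ) (a c : ℤ) (n : ℕ) (hb : 0 < b) (hbL : b < L)
    (hcop : IsCoprime (L : ℤ) b) (ha : 0 < a) (hc : 0 < c) (hac : a + c = L)
    (hcb : (L : ℤ) ∣ c * b - 1) (hn : L ≤ n) (j : ℤ) :
    IsMinPeriod (UU b L n j) L ↔ GoodPos L c n j := by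
  have hL : (0 : ℤ) < L := by omega
  have hab : (L : ℤ) ∣ a * b + 1 := by
    have : a * b + 1 = L * b - (c * b - 1) := by rw [← hac]; ring
    rw [this]
    exact dvd_sub (dvd_mul_right _ _) hcb
  constructor
  · intro hmin
    by_contra hg
    -- reduce j mod L
    have hg' : ∀ i : ℤ, 0 ≤ i → i ≤ n - L → ¬ (L : ℤ) ∣ j + i ∧ ¬ (L : ℤ) ∣ j + c + i := by
      intro i h1 h2
      constructor
      · intro h; exact hg ⟨i, h1, h2, Or.inl h⟩
      · intro h; exact hg ⟨i, h1, h2, Or.inr h⟩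
    rw [← UU_emod b L n j hL.ne'] at hmin
    have hj0 := Int.emod_nonneg j hL.ne'
    have hjL := Int.emod_lt_of_pos j hL
    have hje := Int.emod_add_mul_ediv j L
    set r := j % (L : ℤ) with hr
    set d := j / (L : ℤ) with hd
    have G0 : r ≠ 0 := by
      intro h
      exact (hg' 0 le_rfl (by omega)).1 ⟨d, by omega⟩
    have G1 : r + (n - L) < L := by
      by_contra h
      refine (hg' (L - r) (by omega) (by omega)).1 ⟨d + 1, by linarith⟩
    have G2 : r < a - (n - L) ∨ a < r := by
      by_contra h
      refine (hg' (a - r) (by omega) (by omega)).2 ⟨d + 1, by linarith⟩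
    have ndvd : ∀ x m : ℤ, L * m < x → x < L * m + L → ¬ (L : ℤ) ∣ x := by
      rintro x m h1 h2 ⟨t, rfl⟩
      have h3 : m < t := lt_of_mul_lt_mul_left h1 hL.le
      have h4 : t < m + 1 := by
        have : (L : ℤ) * t < L * (m + 1) := by linarith
        exact lt_of_mul_lt_mul_left this hL.le
      omega
    rcases G2 with G2 | G2
    · have hp : HasPeriod (UU b L n r) a.toNat := by
        rw [UU_period]
        refine ⟨by omega, fun i hi => ?_⟩
        have : ((a.toNat : ℕ) : ℤ) = a := by omega
        rw [this]
        exact SS_shift b L _ a hb hL hbL hcop hab (ndvd _ 0 (by omega) (by omega))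
          (ndvd _ 0 (by omega) (by omega))
      have := hmin.2 _ hp
      omega
    · have hp : HasPeriod (UU b L n r) c.toNat := by
        rw [UU_period]
        refine ⟨by omega, fun i hi => ?_⟩
        have : ((c.toNat : ℕ) : ℤ) = c := by omega
        rw [this]
        have := SS_shift b L (r + i + c) a hb hL hbL hcop hab (ndvd _ 1 (by omega) (by omega))
          (ndvd _ 1 (by omega) (by omega))
        rw [this, show r + i + c + a = r + i + L * 1 by omega, SS_add_mul _ _ _ _ hL.ne']
      have := hmin.2 _ hp
      omega
  · rintro ⟨i, hi0, hi1, hi⟩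
    constructor
    · rw [UU_period]
      refine ⟨by omega, fun k _ => ?_⟩
      have := SS_add_mul b L (j + k) 1 hL.ne'
      rw [mul_one] at this
      exact this.symm
    · intro q hq
      rw [UU_period] at hq
      by_contra hlt
      refine unbordered b L (j + i) q hb.le hL hbL.le hcop hq.1 (by omega) ?_ ?_
      · rcases hi with h | h
        · exact Or.inl (h.mul_right b)
        · right
          have : (j + i) * b + 1 = (j + c + i) * b - (c * b - 1) := by ring
          rw [this]
          exact dvd_sub (h.mul_right b) hcb
      · intro k hk
        have := hq.2 (i.toNat + k) (by omega)
        push_cast at this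
        rw [Int.toNat_of_nonneg hi0] at this
        rw [show j + i + k = j + (i + k) by ring]
        exact this

theorem UU_inj (b : ℤ) (L n : ℕ) (hb : 0 < b) (hbL : b < L)
    (hcop : IsCoprime (L : ℤ) b) (hn : L ≤ n) (j1 j2 : ℤ) (h1 : 0 ≤ j1) (h12 : j1 < j2)
    (h2 : j2 < L) : UU b L n j1 ≠ UU b L n j2 := by
  intro h
  have hL : (0 : ℤ) < L := by omega
  have hs : ∀ i : ℕ, i < n → SS b L (j1 + i) = SS b L (j2 + i) := by
    intro i hi
    rw [← UU_getD b L n j1 i hi, h, UU_getD _ _ _ _ _ hi]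
  refine unbordered b L 0 (j2 - j1).toNat hb.le hL hbL.le hcop (by omega) (by omega)
    (by simp) ?_
  intro k hk
  have hq : (((j2 - j1).toNat : ℕ) : ℤ) = j2 - j1 := by omega
  rw [hq]
  have e0 := Int.emod_nonneg (k - j1) hL.ne'
  have e1 := Int.emod_lt_of_pos (k - j1) hL
  have e2 := Int.emod_add_mul_ediv (k - j1) L
  have := hs ((k - j1) % L).toNat (by omega)
  rw [Int.toNat_of_nonneg e0] at this
  rw [show (0 : ℤ) + k = j1 + (k - j1) % L + L * ((k - j1) / L) by linarith,
    SS_add_mul _ _ _ _ hL.ne', this,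
    show j1 + (k - j1) % L + L * ((k - j1) / L) + (j2 - j1)
      = j2 + (k - j1) % L + L * ((k - j1) / L) by ring, SS_add_mul _ _ _ _ hL.ne']

theorem lower_eq (α β : ℕ) : lowerChristoffel α β = UU β (α + β : ℕ) (α + β) 0 := by
  unfold lowerChristoffel UU SS
  refine List.map_congr_left fun i _ => ?_
  rw [decide_eq_decide]
  rw [zero_add]
  norm_cast

theorem UU_append (b L : ℤ) (m n : ℕ) (j : ℤ) :
    UU b L (m + n) j = UU b L m j ++ UU b L n (j + m) := by
  unfold UU
  rw [List.range_add, List.map_append, List.map_map]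
  congr 1
  refine List.map_congr_left fun i _ => ?_
  simp [add_assoc]

theorem wpow_eq (b : ℤ) (L m : ℕ) (hL : 0 < L) : wpow (UU b L L 0) m = UU b L (m * L) 0 := by
  induction m with
  | zero => simp [wpow, UU]
  | succ m ih =>
    have : wpow (UU b L L 0) (m + 1) = UU b L L 0 ++ wpow (UU b L L 0) m := by
      simp [wpow, List.replicate_succ]
    rw [this, ih, add_mul, one_mul, add_comm (m * L) L, UU_append]
    congr 1
    have := UU_add_mul b L (m * L) 0 1 (by omega)
    rw [← this]; simp

theorem factor_iff (α β n : ℕ) (h : 0 < α + β) (u : List Bool) :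
    (IsOmegaFactor u (lowerChristoffel α β) ∧ u.length = n) ↔
      ∃ j : ℤ, 0 ≤ j ∧ j < (α + β : ℕ) ∧ u = UU β (α + β : ℕ) n j := by
  rw [lower_eq]
  set L := α + β with hLdef
  have hL : (L : ℤ) ≠ 0 := by omega
  constructor
  · rintro ⟨⟨m, s, t, hst⟩, hlen⟩
    rw [wpow_eq _ _ _ h] at hst
    refine ⟨(s.length : ℤ) % L, Int.emod_nonneg _ hL, Int.emod_lt_of_pos _ (by omega), ?_⟩
    rw [UU_emod _ _ _ _ hL]
    have hl := congrArg List.length hst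
    rw [UU_length] at hl
    simp only [List.length_append] at hl
    rw [show m * L = s.length + (n + t.length) by omega, UU_append, UU_append, zero_add,
      List.append_assoc] at hst
    have h1 := (List.append_inj hst (by simp [UU_length])).2
    exact (List.append_inj h1 (by simp [UU_length, hlen])).1
  · rintro ⟨j, hj0, hjL, rfl⟩
    refine ⟨⟨n + 1, ?_⟩, UU_length _ _ _ _⟩
    rw [wpow_eq _ _ _ h]
    have : j.toNat + n ≤ (n + 1) * L := by nlinarith [Int.toNat_of_nonneg hj0]
    obtain ⟨t, ht⟩ := Nat.exists_eq_add_of_le this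
    rw [ht, UU_append, UU_append]
    refine ⟨UU β L j.toNat 0, UU β L t (0 + ((j.toNat + n : ℕ) : ℤ)), ?_⟩
    rw [zero_add (j.toNat : ℤ), Int.toNat_of_nonneg hj0]

open Classical in
/-- The good positions in one period. -/
noncomputable def goodSet (L : ℕ) (c : ℤ) (n : ℕ) : Finset ℤ :=
  (Finset.Ico (0 : ℤ) L).filter (GoodPos L c n)

theorem main_count (α β n : ℕ) (a c : ℤ) (hα : 0 < α) (hβ : 0 < β)
    (hcop : IsCoprime ((α + β : ℕ) : ℤ) β) (ha : 0 < a) (hc : 0 < c) (hac : a + c = (α + β : ℕ))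
    (hcb : ((α + β : ℕ) : ℤ) ∣ c * β - 1) (hn : α + β ≤ n) :
    NFactors α β n = (goodSet (α + β) c n).card ∧
    (HFactors α β n : ℤ) = ∑ j ∈ goodSet (α + β) c n, CC β (α + β : ℕ) n j
      - (n * β / (α + β : ℕ) : ℤ) * NFactors α β n := by
  classical
  set L := α + β with hLdef
  have hL : (0 : ℤ) < L := by omega
  have inj : Set.InjOn (UU β L n) (Finset.Ico (0 : ℤ) L : Set ℤ) := by
    intro x hx y hy hxy
    simp only [Finset.coe_Ico, Set.mem_Ico] at hx hy
    rcases lt_trichotomy x y with h | h | h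
    · exact absurd hxy (UU_inj β L n (by omega) (by omega) hcop hn x y hx.1 h hy.2)
    · exact h
    · exact absurd hxy.symm (UU_inj β L n (by omega) (by omega) hcop hn y x hy.1 h hx.2)
  have hmp := minPeriod_iff β L a c n (by omega) (by omega) hcop ha hc hac hcb hn
  have hN : NFactors α β n = (goodSet L c n).card := by
    unfold NFactors
    have : {u : List Bool | IsOmegaFactor u (lowerChristoffel α β) ∧ u.length = n ∧
        IsMinPeriod u (α + β)} = UU β L n '' (goodSet L c n : Set ℤ) := by
      ext u
      rw [Set.mem_setOf_eq, ← and_assoc, factor_iff α β n (by omega)]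
      constructor
      · rintro ⟨⟨j, h0, h1, rfl⟩, h2⟩
        exact ⟨j, by simp [goodSet, h0]; exact ⟨by push_cast at h1; simpa [hLdef] using h1, (hmp j).1 h2⟩, rfl⟩
      · rintro ⟨j, hj, rfl⟩
        simp only [goodSet, Finset.coe_filter, Finset.mem_Ico, Set.mem_setOf_eq] at hj
        exact ⟨⟨j, hj.1.1, hj.1.2, rfl⟩, (hmp j).2 hj.2⟩
    rw [this, Set.ncard_image_of_injOn, Set.ncard_coe_finset]
    exact inj.mono (by simp only [goodSet]; exact_mod_cast Finset.filter_subset _ _)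
  have hH : HFactors α β n = ((goodSet L c n).filter
      (fun j => CC β L n j = (n * β / L : ℤ) + 1)).card := by
    unfold HFactors
    have : {u : List Bool | IsOmegaFactor u (lowerChristoffel α β) ∧ u.length = n ∧
        IsMinPeriod u (α + β) ∧ u.count true = n * β / (α + β) + 1} = UU β L n ''
        ((goodSet L c n).filter (fun j => CC β L n j = (n * β / L : ℤ) + 1) : Finset ℤ) := by
      have hct : ∀ j, (UU β L n j).count true = n * β / L + 1 ↔
          CC β L n j = (n * β / L : ℤ) + 1 := by
        intro j
        rw [← UU_count β L (by omega) hL (by omega)]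
        norm_cast
      ext u
      rw [Set.mem_setOf_eq, ← and_assoc, factor_iff α β n (by omega)]
      constructor
      · rintro ⟨⟨j, h0, h1, rfl⟩, h2, h3⟩
        refine ⟨j, ?_, rfl⟩
        simp only [goodSet, Finset.coe_filter, Finset.mem_filter, Finset.mem_Ico, Set.mem_setOf_eq]
        exact ⟨⟨⟨h0, h1⟩, (hmp j).1 h2⟩, (hct j).1 h3⟩
      · rintro ⟨j, hj, rfl⟩
        simp only [goodSet, Finset.coe_filter, Finset.mem_filter, Finset.mem_Ico,
          Set.mem_setOf_eq] at hj
        exact ⟨⟨j, hj.1.1.1, hj.1.1.2, rfl⟩, (hmp j).2 hj.1.2, (hct j).2 hj.2⟩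
    rw [this, Set.ncard_image_of_injOn, Set.ncard_coe_finset]
    refine inj.mono ?_
    intro x hx
    simp only [goodSet, Finset.coe_filter, Finset.mem_filter, Set.mem_setOf_eq] at hx
    exact_mod_cast hx.1.1
  refine ⟨hN, ?_⟩
  rw [hH, hN, Finset.card_filter, Finset.card_eq_sum_ones]
  push_cast
  rw [Finset.mul_sum, ← Finset.sum_sub_distrib]
  refine Finset.sum_congr rfl fun j _ => ?_
  -- heavy or light
  have hhl : CC β L n j = (n * β / L : ℤ) ∨ CC β L n j = (n * β / L : ℤ) + 1 := by
    have p1 := Int.emod_add_mul_ediv (j * β) L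
    have p2 := Int.emod_nonneg (j * β) hL.ne'
    have p3 := Int.emod_lt_of_pos (j * β) hL
    have q1 := Int.emod_add_mul_ediv ((n : ℤ) * β) L
    have q2 := Int.emod_nonneg ((n : ℤ) * β) hL.ne'
    have q3 := Int.emod_lt_of_pos ((n : ℤ) * β) hL
    have e : (j + n) * (β : ℤ) = (j * β % L + n * β % L) + L * (j * β / L + n * β / L) := by
      linarith
    have : 0 ≤ (j * β % L + (n : ℤ) * β % L) / L := Int.ediv_nonneg (by omega) hL.le
    have : (j * β % L + (n : ℤ) * β % L) / L < 2 := Int.ediv_lt_of_lt_mul hL (by omega)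
    unfold CC
    rw [e, Int.add_mul_ediv_left _ _ hL.ne']
    omega
  rcases hhl with h | h <;> rw [h] <;> simp

/-- Sum over an arithmetic run of positions. -/
theorem sum_run (f : ℤ → ℤ) (L : ℕ) (hL : 0 < L) (hf : ∀ k, f (k % L) = f k) (e : ℤ) (m : ℕ)
    (hm : m ≤ L) :
    ∑ j ∈ (Finset.range m).image (fun i : ℕ => (e - i) % (L : ℤ)), f j
      = ∑ i ∈ Finset.range m, f (e - i) := by
  rw [Finset.sum_image]
  · exact Finset.sum_congr rfl fun i _ => hf _
  · intro x hx y hy hxy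
    simp only [Finset.coe_range, Set.mem_Iio] at hx hy
    have h1 : (L : ℤ) ∣ (e - x) - (e - y) := Int.ModEq.dvd (Int.ModEq.symm hxy)
    have h2 : (e - x) - (e - y) = 0 := Int.eq_zero_of_abs_lt_dvd h1 (by rw [abs_lt]; omega)
    omega

theorem mem_run (L : ℕ) (hL : 0 < L) (e : ℤ) (m : ℕ) (j : ℤ) :
    j ∈ (Finset.range m).image (fun i : ℕ => (e - i) % (L : ℤ)) ↔
      0 ≤ j ∧ j < L ∧ ∃ i : ℤ, 0 ≤ i ∧ i < m ∧ (L : ℤ) ∣ j - e + i := by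
  rw [Finset.mem_image]
  constructor
  · rintro ⟨i, hi, rfl⟩
    rw [Finset.mem_range] at hi
    refine ⟨Int.emod_nonneg _ (by omega), Int.emod_lt_of_pos _ (by omega), i, by omega, by omega, ?_⟩
    have := Int.emod_add_mul_ediv (e - i) L
    exact ⟨-((e - i) / L), by linarith⟩
  · rintro ⟨h0, h1, i, hi0, him, t, ht⟩
    refine ⟨i.toNat, by rw [Finset.mem_range]; omega, ?_⟩
    rw [Int.toNat_of_nonneg hi0, show e - i = j + L * (-t) by linarith, Int.add_mul_emod_self_left,
      Int.emod_eq_of_lt h0 h1]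

theorem mem_goodSet (L : ℕ) (c : ℤ) (n : ℕ) (j : ℤ) :
    j ∈ goodSet L c n ↔ 0 ≤ j ∧ j < L ∧ GoodPos L c n j := by
  simp [goodSet, and_assoc]

theorem sum_all (b : ℤ) (L : ℕ) (hL : 0 < L) (n : ℕ) :
    ∑ j ∈ Finset.Ico (0 : ℤ) L, CC b L n j = n * b := by
  have hI : ∑ j ∈ Finset.Ico (0 : ℤ) L, CC b L n j = ∑ j ∈ Finset.range L, CC b L n (j : ℤ) := by
    symm
    refine Finset.sum_bij (fun (i : ℕ) _ => (i : ℤ)) ?_ ?_ ?_ ?_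
    · intro i hi; simp at hi ⊢; omega
    · intro i _ k _ h; exact_mod_cast h
    · intro k hk; simp at hk; exact ⟨k.toNat, by simp; omega, by omega⟩
    · intros; rfl
  rw [hI]
  have hLz : (L : ℤ) ≠ 0 := by omega
  induction n with
  | zero => simp [CC]
  | succ n ih =>
    have key : ∑ j ∈ Finset.range L, CC b L ((n + 1 : ℕ) : ℤ) (j : ℤ)
        = ∑ j ∈ Finset.range L, CC b L n (j : ℤ)
        + ∑ j ∈ Finset.range L, ((((j + 1 : ℕ) : ℤ) + n) * b / L - ((j : ℤ) + n) * b / L) := by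
      rw [← Finset.sum_add_distrib]
      refine Finset.sum_congr rfl fun j _ => ?_
      unfold CC
      push_cast
      rw [show (j : ℤ) + (n + 1) = j + 1 + n by ring]
      ring
    have hI' : ∑ j ∈ Finset.Ico (0 : ℤ) L, CC b L n j
      = ∑ j ∈ Finset.range L, CC b L n (j : ℤ) := by
      symm
      refine Finset.sum_bij (fun (i : ℕ) _ => (i : ℤ)) ?_ ?_ ?_ ?_
      · intro i hi; simp at hi ⊢; omega
      · intro i _ k _ h; exact_mod_cast h
      · intro k hk; simp at hk; exact ⟨k.toNat, by simp; omega, by omega⟩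
      · intros; rfl
    rw [key, ih hI', Finset.sum_range_sub (fun j : ℕ => ((j : ℤ) + n) * b / L)]
    rw [show ((L : ℤ) + n) * b = n * b + L * b by ring, Int.add_mul_ediv_left _ _ hLz]
    push_cast
    ring_nf

theorem CC_run0 (α β n i : ℕ) :
    CC β (α + β : ℕ) n (0 - i) =
      ⌊((β : ℚ) / (α + β)) * ((n : ℚ) - (i : ℚ))⌋ + ⌈((β : ℚ) / (α + β)) * (i : ℚ)⌉ := by
  have h1 : ((β : ℚ) / (α + β)) * ((n : ℚ) - (i : ℚ))
      = ((((n : ℤ) - i) * β : ℤ) : ℚ) / ((α + β : ℕ) : ℚ) := by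
    push_cast; ring
  have h2 : ((β : ℚ) / (α + β)) * (i : ℚ) = (((i : ℤ) * β : ℤ) : ℚ) / ((α + β : ℕ) : ℚ) := by
    push_cast; ring
  rw [h1, h2, Rat.floor_intCast_div_natCast, Rat.ceil_intCast_div_natCast]
  unfold CC
  rw [show (0 - (i : ℤ)) * β = -(i * β) by ring, show (0 - (i : ℤ) + n) * β = (n - i) * β by ring]
  ring

theorem CC_run1 (α β n i : ℕ) (c : ℤ) (hL : 0 < α + β) (hcb : ((α + β : ℕ) : ℤ) ∣ c * β - 1) :
    CC β (α + β : ℕ) n (-c - i) =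
      ⌈((β : ℚ) / (α + β)) * ((n : ℚ) - (i : ℚ))⌉ + ⌊((β : ℚ) / (α + β)) * (i : ℚ)⌋ := by
  have h1 : ((β : ℚ) / (α + β)) * ((n : ℚ) - (i : ℚ))
      = ((((n : ℤ) - i) * β : ℤ) : ℚ) / ((α + β : ℕ) : ℚ) := by
    push_cast; ring
  have h2 : ((β : ℚ) / (α + β)) * (i : ℚ) = (((i : ℤ) * β : ℤ) : ℚ) / ((α + β : ℕ) : ℚ) := by
    push_cast; ring
  rw [h1, h2, Rat.floor_intCast_div_natCast, Rat.ceil_intCast_div_natCast]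
  have hLz : (0 : ℤ) < (α + β : ℕ) := by omega
  obtain ⟨t, ht⟩ := hcb
  unfold CC
  rw [show (-c - (i : ℤ)) * β = (-(i * β) - 1) + ((α + β : ℕ) : ℤ) * (-t) by linarith,
    show (-c - (i : ℤ) + n) * β = ((n - i) * β - 1) + ((α + β : ℕ) : ℤ) * (-t) by linarith,
    Int.add_mul_ediv_left _ _ hLz.ne', Int.add_mul_ediv_left _ _ hLz.ne', ediv_pred _ _ hLz,
    ediv_pred _ _ hLz, neg_neg]
  ring

theorem floor_n (α β n : ℕ) :
    ⌊((β : ℚ) / (α + β)) * (n : ℚ)⌋ = (n * β / (α + β : ℕ) : ℤ) := by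
  have h2 : ((β : ℚ) / (α + β)) * (n : ℚ) = (((n : ℤ) * β : ℤ) : ℚ) / ((α + β : ℕ) : ℚ) := by
    push_cast; ring
  rw [h2, Rat.floor_intCast_div_natCast]


/-- Closed formula for `H_{α,β}(n)`; here `σ = β/(α+β)` and `a'`, `b'` are
the multiplicative inverses of `α`, `β` modulo `α + β`, taken in `{1, …, α+β−1}`. -/
theorem stmt11 (α β n a' b' : ℕ) (hα : 0 < α) (hβ : 0 < β) (hn : 0 < n)
    (ha' : Nat.Coprime α β → 1 ≤ a' ∧ a' ≤ α + β - 1 ∧ α * a' % (α + β) = 1)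
    (hb' : Nat.Coprime α β → 1 ≤ b' ∧ b' ≤ α + β - 1 ∧ β * b' % (α + β) = 1) :
    (NFactors α β n = 0 → HFactors α β n = 0) ∧
    (Nat.Coprime α β → α + β ≤ n → n < α + β + min a' b' →
      (HFactors α β n : ℤ) =
        2 * (∑ i ∈ Finset.range (n - α - β + 1),
          (⌈((β : ℚ) / (α + β)) * ((n : ℚ) - (i : ℚ))⌉ + ⌊((β : ℚ) / (α + β)) * (i : ℚ)⌋))
        - ⌊((β : ℚ) / (α + β)) * (n : ℚ)⌋ * (NFactors α β n : ℤ)) ∧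
    (Nat.Coprime α β → α + β + b' ≤ n → n < α + β + a' →
      (HFactors α β n : ℤ) =
        (∑ i ∈ Finset.range (n - a' + 1),
          (⌊((β : ℚ) / (α + β)) * ((n : ℚ) - (i : ℚ))⌋ + ⌈((β : ℚ) / (α + β)) * (i : ℚ)⌉))
        - ⌊((β : ℚ) / (α + β)) * (n : ℚ)⌋ * (NFactors α β n : ℤ)) ∧
    (Nat.Coprime α β → α + β + a' ≤ n → n < α + β + b' →
      (HFactors α β n : ℤ) =
        (∑ i ∈ Finset.range (n - b' + 1),
          (⌈((β : ℚ) / (α + β)) * ((n : ℚ) - (i : ℚ))⌉ + ⌊((β : ℚ) / (α + β)) * (i : ℚ)⌋))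
        - ⌊((β : ℚ) / (α + β)) * (n : ℚ)⌋ * (NFactors α β n : ℤ)) ∧
    (Nat.Coprime α β → α + β + max a' b' ≤ n →
      HFactors α β n = n * β % (α + β)) := by
  have hLpos : 0 < α + β := by omega
  refine ⟨?_, ?_⟩
  · intro h
    unfold NFactors at h
    unfold HFactors
    rw [Set.ncard_eq_zero ((List.finite_length_eq Bool n).subset (fun u hu => hu.2.1))] at h
    have : {u : List Bool | IsOmegaFactor u (lowerChristoffel α β) ∧ u.length = n ∧
        IsMinPeriod u (α + β) ∧ u.count true = n * β / (α + β) + 1} = ∅ := by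
      rw [Set.eq_empty_iff_forall_notMem] at h ⊢
      exact fun u hu => h u ⟨hu.1, hu.2.1, hu.2.2.1⟩
    rw [this, Set.ncard_empty]
  have pre : Nat.Coprime α β → IsCoprime ((α + β : ℕ) : ℤ) β ∧ 1 ≤ a' ∧ 1 ≤ b' ∧
      a' + b' = α + β ∧ ((α + β : ℕ) : ℤ) ∣ (b' : ℤ) * β - 1 := by
    intro hc
    obtain ⟨x1, x2, x3⟩ := ha' hc
    obtain ⟨y1, y2, y3⟩ := hb' hc
    have hcop : Nat.Coprime (α + β) β := by simpa using hc
    have e1 := Nat.mod_add_div (α * a') (α + β)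
    have e2 := Nat.mod_add_div (β * b') (α + β)
    rw [x3] at e1
    rw [y3] at e2
    have hcopz : IsCoprime ((α + β : ℕ) : ℤ) β := Nat.isCoprime_iff_coprime.2 hcop
    set s := α * a' / (α + β)
    set t := β * b' / (α + β)
    zify at e1 e2
    have hd : ((α + β : ℕ) : ℤ) ∣ ((a' : ℤ) + b') := by
      refine hcopz.dvd_of_dvd_mul_right ⟨a' + t - s, ?_⟩
      push_cast
      linear_combination e1 - e2
    have hd2 : α + β ∣ a' + b' := by exact_mod_cast hd
    obtain ⟨k, hk⟩ := hd2
    have hk1 : k = 1 := by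
      have : k ≠ 0 := by rintro rfl; omega
      have : k < 2 := by
        by_contra h
        have : (α + β) * 2 ≤ (α + β) * k := Nat.mul_le_mul_left _ (by omega)
        omega
      omega
    subst hk1
    refine ⟨hcopz, x1, y1, by omega, t, ?_⟩
    push_cast
    linarith
  have hf : ∀ k, CC β ((α + β : ℕ) : ℤ) n (k % ((α + β : ℕ) : ℤ)) = CC β ((α + β : ℕ) : ℤ) n k :=
    fun k => CC_emod _ _ _ _ (by omega)
  refine ⟨?_, ?_, ?_, ?_⟩
  · intro hc hn1 hn2
    obtain ⟨hcop, p1, p2, p3, p4⟩ := pre hc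
    have hna : n < α + β + a' ∧ n < α + β + b' := by omega
    clear hn2
    rw [(main_count α β n a' b' hα hβ hcop (by omega) (by omega) (by omega) p4 hn1).2, floor_n]
    congr 1
    have hG : goodSet (α + β) b' n =
        (Finset.range (n - α - β + 1)).image (fun i : ℕ => (0 - i) % ((α + β : ℕ) : ℤ)) ∪
        (Finset.range (n - α - β + 1)).image (fun i : ℕ => (-b' - i) % ((α + β : ℕ) : ℤ)) := by
      ext j
      rw [mem_goodSet, Finset.mem_union, mem_run _ hLpos, mem_run _ hLpos]
      constructor
      · rintro ⟨h0, h1, i, hi0, hi1, hi | hi⟩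
        · exact Or.inl ⟨h0, h1, i, hi0, by omega, by simpa using hi⟩
        · exact Or.inr ⟨h0, h1, i, hi0, by omega, by simpa using hi⟩
      · rintro (⟨h0, h1, i, hi0, hi1, hi⟩ | ⟨h0, h1, i, hi0, hi1, hi⟩)
        · exact ⟨h0, h1, i, hi0, by omega, Or.inl (by simpa using hi)⟩
        · exact ⟨h0, h1, i, hi0, by omega, Or.inr (by simpa using hi)⟩
    have hdis : Disjoint
        ((Finset.range (n - α - β + 1)).image (fun i : ℕ => (0 - i) % ((α + β : ℕ) : ℤ)))
        ((Finset.range (n - α - β + 1)).image (fun i : ℕ => (-b' - i) % ((α + β : ℕ) : ℤ))) := by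
      rw [Finset.disjoint_left]
      intro j hj hj'
      rw [mem_run _ hLpos] at hj hj'
      obtain ⟨_, _, i, i0, i1, i2⟩ := hj
      obtain ⟨_, _, k, k0, k1, k2⟩ := hj'
      have hd := dvd_sub k2 i2
      have := Int.eq_zero_of_abs_lt_dvd hd (by rw [abs_lt]; omega)
      omega
    rw [hG, Finset.sum_union hdis, sum_run _ _ hLpos hf _ _ (by omega),
      sum_run _ _ hLpos hf _ _ (by omega), two_mul]
    have hsecond : ∑ i ∈ Finset.range (n - α - β + 1), CC β ((α + β : ℕ) : ℤ) n (-b' - i) =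
        ∑ i ∈ Finset.range (n - α - β + 1),
          (⌈((β : ℚ) / (α + β)) * ((n : ℚ) - (i : ℚ))⌉ + ⌊((β : ℚ) / (α + β)) * (i : ℚ)⌋) :=
      Finset.sum_congr rfl fun i _ => CC_run1 α β n i b' hLpos p4
    rw [hsecond]
    congr 1
    rw [← hsecond, ← Finset.sum_range_reflect]
    refine Finset.sum_congr rfl fun i hi => ?_
    rw [Finset.mem_range] at hi
    rw [CC_run1 α β n i b' hLpos p4, CC_run0]
    have hcast : ((n - α - β + 1 - 1 - i : ℕ) : ℚ) = (n : ℚ) - α - β - i := by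
      have : n - α - β + 1 - 1 - i + α + β + i = n := by omega
      have h2 : ((n - α - β + 1 - 1 - i : ℕ) : ℚ) + α + β + i = n := by exact_mod_cast this
      linarith
    rw [hcast]
    have hne : (α : ℚ) + β ≠ 0 := by positivity
    have q1 : ((β : ℚ) / (α + β)) * ((n : ℚ) - ((n : ℚ) - α - β - i))
        = ((β : ℚ) / (α + β)) * i + (β : ℕ) := by field_simp; ring
    have q2 : ((β : ℚ) / (α + β)) * ((n : ℚ) - α - β - i)
        = ((β : ℚ) / (α + β)) * ((n : ℚ) - i) - (β : ℕ) := by field_simp; ring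
    rw [q1, q2, Int.floor_add_natCast, Int.ceil_sub_natCast]
    ring
  · intro hc hn1 hn2
    obtain ⟨hcop, p1, p2, p3, p4⟩ := pre hc
    rw [(main_count α β n a' b' hα hβ hcop (by omega) (by omega) (by omega) p4 (by omega)).2, floor_n]
    congr 1
    have hG : goodSet (α + β) b' n =
        (Finset.range (n - a' + 1)).image (fun i : ℕ => (0 - i) % ((α + β : ℕ) : ℤ)) := by
      ext j
      rw [mem_goodSet, mem_run _ hLpos]
      constructor
      · rintro ⟨h0, h1, i, hi0, hi1, hi | hi⟩
        · exact ⟨h0, h1, i, hi0, by omega, by simpa using hi⟩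
        · exact ⟨h0, h1, b' + i, by omega, by omega, by simpa [add_assoc] using hi⟩
      · rintro ⟨h0, h1, i, hi0, hi1, hi⟩
        refine ⟨h0, h1, ?_⟩
        by_cases hib : i < b'
        · exact ⟨i, hi0, by omega, Or.inl (by simpa using hi)⟩
        · exact ⟨i - b', by omega, by omega, Or.inr (by simpa using hi)⟩
    rw [hG, sum_run _ _ hLpos hf _ _ (by omega)]
    exact Finset.sum_congr rfl fun i _ => CC_run0 α β n i
  · intro hc hn1 hn2
    obtain ⟨hcop, p1, p2, p3, p4⟩ := pre hc
    rw [(main_count α β n a' b' hα hβ hcop (by omega) (by omega) (by omega) p4 (by omega)).2, floor_n]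
    congr 1
    have hG : goodSet (α + β) b' n =
        (Finset.range (n - b' + 1)).image (fun i : ℕ => (-b' - i) % ((α + β : ℕ) : ℤ)) := by
      ext j
      rw [mem_goodSet, mem_run _ hLpos]
      constructor
      · rintro ⟨h0, h1, i, hi0, hi1, hi | hi⟩
        · refine ⟨h0, h1, i + a', by omega, by omega, ?_⟩
          rw [show j - -(b' : ℤ) + (i + a') = (j + i) + ((α + β : ℕ) : ℤ) by omega]
          exact dvd_add hi (dvd_refl _)
        · exact ⟨h0, h1, i, hi0, by omega, by simpa using hi⟩
      · rintro ⟨h0, h1, i, hi0, hi1, hi⟩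
        refine ⟨h0, h1, ?_⟩
        by_cases hib : i < a'
        · exact ⟨i, hi0, by omega, Or.inr (by simpa using hi)⟩
        · refine ⟨i - a', by omega, by omega, Or.inl ?_⟩
          rw [show j + (i - a') = (j - -(b' : ℤ) + i) - ((α + β : ℕ) : ℤ) by omega]
          exact dvd_sub hi (dvd_refl _)
    rw [hG, sum_run _ _ hLpos hf _ _ (by omega)]
    exact Finset.sum_congr rfl fun i _ => CC_run1 α β n i b' hLpos p4
  · intro hc hn1
    obtain ⟨hcop, p1, p2, p3, p4⟩ := pre hc
    have hna : α + β + a' ≤ n ∧ α + β + b' ≤ n := by omega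
    have hG : goodSet (α + β) b' n = Finset.Ico (0 : ℤ) ((α + β : ℕ) : ℤ) := by
      ext j
      rw [mem_goodSet, Finset.mem_Ico, ← and_assoc]
      refine and_iff_left_of_imp ?_
      rintro ⟨h0, h1⟩
      by_cases hj : ((α + β : ℕ) : ℤ) - j < b'
      · exact ⟨(α + β : ℕ) - j, by omega, by omega, Or.inl (by simp)⟩
      · exact ⟨(α + β : ℕ) - j - b', by omega, by omega, Or.inr (by
          rw [show j + b' + (((α + β : ℕ) : ℤ) - j - b') = ((α + β : ℕ) : ℤ) by ring])⟩
    obtain ⟨hN, hm⟩ := main_count α β n a' b' hα hβ hcop (by omega) (by omega) (by omega) p4 (by omega)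
    rw [hG, Int.card_Ico, sub_zero, Int.toNat_natCast] at hN
    rw [hG, sum_all _ _ hLpos, hN] at hm
    zify
    rw [hm]
    have := Int.emod_add_mul_ediv ((n : ℤ) * β) ((α + β : ℕ) : ℤ)
    push_cast at this ⊢
    linarith
end

section
/- For all positive integers a and b, the number of balanced binary words with Parikh vector (a,b) equals Σ_{α=1}^{a} Σ_{β positive integer with α(b−1)/(a+1) < β ≤ αb/a} H_{α,β}(a+b) + Σ_{β=1}^{b} Σ_{α positive integer with β(a−1)/(b+1) < α ≤ βa/b} (N_{α,β}(a+b) − H_{α,β}(a+b)). Moreover, if exactly one of a, b is zero, the number of balanced binary words with Parikh vector (a,b) equals 1. -/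
def Fits (S : ℕ → ℤ) (n p : ℕ) (h : ℤ) : Prop :=
  ∀ i ≤ n, ∀ j ≤ n, (p : ℤ) * (S j - S i) - h * ((j : ℤ) - i) < p

lemma Fits.neg {S : ℕ → ℤ} {n p : ℕ} {h : ℤ} (H : Fits S n p h) : Fits (fun x => - S x) n p (-h) := by
  intro i hi j hj
  have := H j hj i hi
  simp only
  linarith

lemma Fits.coprime {S : ℕ → ℤ} {n p : ℕ} {h : ℤ} (hp : 0 < p) (H : Fits S n p h)
    (hmin : ∀ p' : ℕ, 0 < p' → p' < p → ∀ h', ¬ Fits S n p' h') : IsCoprime h (p : ℤ) := by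
  rw [Int.isCoprime_iff_gcd_eq_one]
  by_contra hg
  set g := Int.gcd h p with hgd
  have hgpos : 0 < g := Int.gcd_pos_of_ne_zero_right _ (by exact_mod_cast hp.ne')
  have h1 : (g : ℤ) ∣ h := Int.gcd_dvd_left ..
  have h2 : (g : ℤ) ∣ p := Int.gcd_dvd_right ..
  have h2' : g ∣ p := by exact_mod_cast h2
  clear_value g
  obtain ⟨h', rfl⟩ := h1
  obtain ⟨p', rfl⟩ := h2'
  have hp' : 0 < p' := by
    rcases Nat.eq_zero_or_pos p' with h0 | h0
    · simp [h0] at hp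
    · exact h0
  refine hmin p' hp' (by nlinarith [show 2 ≤ g by omega]) h' ?_
  intro i hi j hj
  have := H i hi j hj
  push_cast at this
  have hg0 : (0 : ℤ) < g := by exact_mod_cast hgpos
  by_contra hc
  push Not at hc
  nlinarith

/-- Key lemma: extreme pair in increasing order of positions. -/
lemma Fits.extreme {S : ℕ → ℤ} {n p : ℕ} {h : ℤ} (hp : 1 < p) (H : Fits S n p h)
    (hmin : ∀ p' : ℕ, 0 < p' → p' < p → ∀ h', ¬ Fits S n p' h') :
    ∃ i j : ℕ, i < j ∧ j ≤ n ∧ (p * S i - h * i) - (p * S j - h * j) = (p : ℤ) - 1 := by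
  obtain ⟨u, v, huv⟩ := H.coprime (by omega) hmin
  have hp0 : (0 : ℤ) < p := by exact_mod_cast (by omega : 0 < p)
  obtain ⟨s, B, hs0, hsp, hsB⟩ : ∃ (s : ℕ) (B : ℤ), 0 < s ∧ s < p ∧ (p : ℤ) * B - h * s = 1 := by
    have hm0 := Int.emod_nonneg (-u) hp0.ne'
    have hm1 := Int.emod_lt_of_pos (-u) hp0
    have hm2 := Int.emod_add_mul_ediv (-u) p
    refine ⟨((-u) % p).toNat, v - h * ((-u) / p), ?_, ?_, ?_⟩
    · by_contra hc
      have : (-u) % p = 0 := by omega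
      rw [this] at hm2
      have hd : (p : ℤ) ∣ 1 := ⟨v - h * ((-u)/p), by linear_combination (-1) * huv + h * hm2⟩
      have := Int.le_of_dvd one_pos hd
      omega
    · omega
    · rw [Int.toNat_of_nonneg hm0]
      linear_combination huv + (-h) * hm2
  have hnf := hmin s hs0 hsp B
  unfold Fits at hnf
  push Not at hnf
  obtain ⟨y, hy, x, hx, hxy⟩ := hnf
  have key : ∀ d : ℕ, ∀ x : ℕ, (p * S x - h * x) - (p * S y - h * y) = (p : ℤ) - (d + 1) →
      x + (d + 1) * s ≤ y → ∃ i j : ℕ, i < j ∧ j ≤ n ∧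
        (p * S i - h * i) - (p * S j - h * j) = (p : ℤ) - 1 := by
    intro d
    induction d with
    | zero =>
      intro x h1 h2
      refine ⟨x, y, by nlinarith, hy, by rw [h1]; simp⟩
    | succ d ih =>
      intro x h1 h2
      have hxs : x + s ≤ n := by nlinarith
      have hA := H x (by omega) (x + s) hxs
      have hA' := H (x + s) hxs x (by omega)
      push_cast at hA hA'
      have ht : (p * S (x + s) - h * ((x + s : ℕ) : ℤ)) - (p * S x - h * x) = 1 + p * (S (x + s) - S x - B) := by
        push_cast; linear_combination hsB
      push_cast at ht
      set t := S (x + s) - S x - B with htd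
      have ht1 : t ≤ 0 := by
        by_contra hc
        have : 1 ≤ t := by omega
        nlinarith
      have ht2 : -1 ≤ t := by
        by_contra hc
        have : t ≤ -2 := by omega
        nlinarith
      have : t = 0 ∨ t = -1 := by omega
      rcases this with h0 | h0
      · refine ih (x + s) ?_ ?_
        · push_cast at h1 ⊢
          rw [h0] at ht
          linarith
        · nlinarith
      · refine ⟨x, x + s, by omega, hxs, ?_⟩
        push_cast
        rw [h0] at ht
        linarith
  have hrel : s * ((p * S x - h * x) - (p * S y - h * y)) - ((x : ℤ) - y) = p * (s * (S x - S y) - B * ((x : ℤ) - y)) := by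
    linear_combination ((x : ℤ) - y) * hsB
  have hD := H y hy x hx
  obtain ⟨d, hd⟩ : ∃ d : ℕ, (p * S x - h * x) - (p * S y - h * y) = (p : ℤ) - (d + 1) :=
    ⟨((p : ℤ) - 1 - ((p * S x - h * x) - (p * S y - h * y))).toNat, by
      rw [Int.toNat_of_nonneg (by linarith)]; ring⟩
  refine key d x hd ?_
  rw [hd] at hrel
  have : (p : ℤ) * s ≤ s * (p - (d + 1)) - ((x : ℤ) - y) := by
    rw [hrel]; exact mul_le_mul_of_nonneg_left hxy hp0.le
  have : ((x + (d + 1) * s : ℕ) : ℤ) ≤ y := by push_cast; linarith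
  exact_mod_cast this

lemma Fits.cong {S : ℕ → ℤ} {p : ℕ} {h : ℤ} (hc : IsCoprime h (p : ℤ)) {i j : ℕ}
    (hD : p * S i - h * i = p * S j - h * j) : (p : ℤ) ∣ (i : ℤ) - j := by
  refine hc.symm.dvd_of_dvd_mul_left ⟨S i - S j, ?_⟩
  linear_combination -hD

lemma dvd_close {p i j : ℕ} (hd : (p : ℤ) ∣ (i : ℤ) - j) (h1 : i < j + p) (h2 : j < i + p) : i = j := by
  obtain ⟨k, hk⟩ := hd
  have : k = 0 := by
    have h3 : (p : ℤ) * k < p * 1 := by omega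
    have h4 : (p : ℤ) * (-1) < p * k := by omega
    have hp : (0 : ℤ) ≤ p := by omega
    have := lt_of_mul_lt_mul_left h3 hp
    have := lt_of_mul_lt_mul_left h4 hp
    omega
  subst this
  omega

lemma noperiod_aux {S : ℕ → ℤ} {n p : ℕ} {h : ℤ} (hp : 1 < p) (H : Fits S n p h)
    (hmin : ∀ p' : ℕ, 0 < p' → p' < p → ∀ h', ¬ Fits S n p' h')
    (hmin' : ∀ p' : ℕ, 0 < p' → p' < p → ∀ h', ¬ Fits (fun x => - S x) n p' h')
    {q : ℕ} (hqp : q < p) {g : ℤ} 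
    (hper : ∀ x, x + q ≤ n → S (x + q) = S x + g) (hc : 0 < p * g - h * q) : False := by
  obtain ⟨i, j, hij, hj, hD⟩ := H.extreme hp hmin
  obtain ⟨i', j', hij', hj', hD'⟩ := H.neg.extreme hp hmin'
  have hco := H.coprime (by omega) hmin
  have e1 := H i' (by omega) i (by omega)
  have e2 := H j (by omega) j' (by omega)
  have e3 := H j (by omega) i (by omega)
  have e4 := H i' (by omega) j' (by omega)
  have hmax : p * S i - h * i = p * S j' - h * j' := by linarith
  have hminq : p * S j - h * j = p * S i' - h * i' := by linarith
  have c1 := Fits.cong hco hmax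
  have c2 := Fits.cong hco hminq
  have hi : n < i + q := by
    by_contra hh
    push Not at hh
    have := H j hj (i + q) hh
    rw [hper i hh] at this
    push_cast at this
    linarith
  have hj2 : n < j' + q := by
    by_contra hh
    push Not at hh
    have := H j hj (j' + q) hh
    rw [hper j' hh] at this
    push_cast at this
    linarith
  have hjq : j < q := by
    by_contra hh
    push Not at hh
    obtain ⟨k, rfl⟩ := Nat.exists_eq_add_of_le' hh
    have := H k (by omega) i (by omega)
    rw [hper k hj] at hD
    push_cast at hD
    linarith
  have hiq : i' < q := by
    by_contra hh
    push Not at hh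
    obtain ⟨k, rfl⟩ := Nat.exists_eq_add_of_le' hh
    have := H k (by omega) j' (by omega)
    rw [hper k (by omega)] at hD'
    push_cast at hD'
    linarith
  have := dvd_close c1 (by omega) (by omega)
  have := dvd_close c2 (by omega) (by omega)
  omega

lemma core {S : ℕ → ℤ} {n : ℕ} (hn : 0 < n) (hex : ∃ p : ℕ, 0 < p ∧ ∃ h, Fits S n p h) :
    ∃ (p : ℕ) (h : ℤ), 0 < p ∧ p ≤ n ∧ Fits S n p h ∧
      ∀ q, 0 < q → ∀ g, (∀ x, x + q ≤ n → S (x + q) = S x + g) → p ≤ q := by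
  classical
  obtain ⟨hp, h, H⟩ := Nat.find_spec hex
  have hm := fun m => Nat.find_min hex (m := m)
  set p := Nat.find hex with hpd
  have hmin : ∀ p' : ℕ, 0 < p' → p' < p → ∀ h', ¬ Fits S n p' h' := by
    intro p' h0 h1 h' hf
    exact hm p' h1 ⟨h0, h', hf⟩
  have hmin' : ∀ p' : ℕ, 0 < p' → p' < p → ∀ h', ¬ Fits (fun x => - S x) n p' h' := by
    intro p' h0 h1 h' hf
    refine hmin p' h0 h1 (-h') ?_
    simpa using hf.neg
  by_cases hp1 : p = 1
  · exact ⟨p, h, hp, by omega, H, fun q hq _ _ => by omega⟩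
  have hp2 : 1 < p := by omega
  have hco := H.coprime hp hmin
  refine ⟨p, h, hp, ?_, H, ?_⟩
  · by_contra hh
    push Not at hh
    obtain ⟨i, j, hij, hj, hD⟩ := H.extreme hp2 hmin
    obtain ⟨i', j', hij', hj', hD'⟩ := H.neg.extreme hp2 hmin'
    have e1 := H i' (by omega) i (by omega)
    have e2 := H j (by omega) j' (by omega)
    have e3 := H j (by omega) i (by omega)
    have e4 := H i' (by omega) j' (by omega)
    have hmax : p * S i - h * i = p * S j' - h * j' := by linarith
    have hminq : p * S j - h * j = p * S i' - h * i' := by linarith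
    have c1 := dvd_close (Fits.cong hco hmax) (by omega) (by omega)
    have c2 := dvd_close (Fits.cong hco hminq) (by omega) (by omega)
    omega
  · intro q hq g hper
    by_contra hqp
    push Not at hqp
    rcases lt_trichotomy (p * g - h * q) 0 with hc | hc | hc
    · refine noperiod_aux (S := fun x => - S x) hp2 H.neg hmin' (by simpa using hmin) hqp (g := -g) ?_ ?_
      · intro x hx; rw [hper x hx]; ring
      · linarith
    · have hd : (p : ℤ) ∣ q := hco.symm.dvd_of_dvd_mul_left ⟨g, by linarith⟩
      have := Int.le_of_dvd (by exact_mod_cast hq) hd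
      omega
    · exact noperiod_aux hp2 H hmin hmin' hqp hper hc

lemma Fits.period {S : ℕ → ℤ} {n p : ℕ} {h : ℤ} (H : Fits S n p h) (x : ℕ) (hx : x + p ≤ n) :
    S (x + p) = S x + h := by
  have h1 := H x (by omega) (x + p) hx
  have h2 := H (x + p) hx x (by omega)
  push_cast at h1 h2
  have hp : (0 : ℤ) ≤ p := by omega
  have h3 : (p : ℤ) * (S (x + p) - S x - h) < p * 1 := by linarith
  have h4 : (p : ℤ) * (-1) < p * (S (x + p) - S x - h) := by linarith
  have := lt_of_mul_lt_mul_left h3 hp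
  have := lt_of_mul_lt_mul_left h4 hp
  omega

lemma bal_ineq {S : ℕ → ℤ} {n : ℕ}
    (hb : ∀ i j k, i + k ≤ n → j + k ≤ n → (S (i + k) - S i) - (S (j + k) - S j) ≤ 1) :
    ∀ N u v i j : ℕ, u + v ≤ N → 0 < u → 0 < v → i + u ≤ n → j + v ≤ n →
      v * (S (i + u) - S i - 1) < u * (S (j + v) - S j + 1) := by
  intro N
  induction N with
  | zero => intros; omega
  | succ N ih =>
    intro u v i j hN hu hv hi hj
    rcases lt_trichotomy u v with h | h | h
    · obtain ⟨w, rfl⟩ := Nat.exists_eq_add_of_lt h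
      have h1 := ih u (w + 1) i (j + u) (by omega) hu (by omega) hi (by omega)
      have h2 := hb i j u hi (by omega)
      have e : j + u + (w + 1) = j + (u + w + 1) := by ring
      rw [e] at h1
      push_cast at h1 ⊢
      have hu' : (0 : ℤ) ≤ u := by omega
      nlinarith
    · subst h
      have h2 := hb i j u hi hj
      have hu' : (0 : ℤ) < u := by omega
      nlinarith
    · obtain ⟨w, rfl⟩ := Nat.exists_eq_add_of_lt h
      have h1 := ih (w + 1) v (i + v) j (by omega) (by omega) hv (by omega) hj
      have h2 := hb i j v (by omega) hj
      have e : i + v + (w + 1) = i + (v + w + 1) := by ring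
      rw [e] at h1
      push_cast at h1 ⊢
      have hu' : (0 : ℤ) ≤ v := by omega
      nlinarith

lemma bal_fits {S : ℕ → ℤ} {n : ℕ} (hn : 0 < n)
    (hb : ∀ i j k, i + k ≤ n → j + k ≤ n → (S (i + k) - S i) - (S (j + k) - S j) ≤ 1) :
    ∃ p : ℕ, 0 < p ∧ ∃ h, Fits S n p h := by
  classical
  let I : Finset (ℕ × ℕ) := ((Finset.range (n + 1)) ×ˢ (Finset.Icc 1 n)).filter (fun x => x.1 + x.2 ≤ n)
  have hI : I.Nonempty := ⟨(0, 1), by simp [I]; omega⟩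
  have hmem : ∀ x ∈ I, 0 < x.2 ∧ x.1 + x.2 ≤ n := by
    intro x hx; simp [I] at hx; omega
  let lo : ℕ × ℕ → ℚ := fun x => ((S (x.1 + x.2) - S x.1 - 1 : ℤ) : ℚ) / x.2
  let up : ℕ × ℕ → ℚ := fun x => ((S (x.1 + x.2) - S x.1 + 1 : ℤ) : ℚ) / x.2
  obtain ⟨x, hx, hxm⟩ := Finset.exists_max_image I lo hI
  obtain ⟨y, hy, hym⟩ := Finset.exists_min_image I up hI
  have hlt : lo x < up y := by
    have h1 := hmem x hx
    have h2 := hmem y hy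
    have := bal_ineq hb _ x.2 y.2 x.1 y.1 le_rfl h1.1 h2.1 h1.2 h2.2
    simp only [lo, up]
    rw [div_lt_div_iff₀ (by exact_mod_cast h1.1) (by exact_mod_cast h2.1)]
    have : ((y.2 * (S (x.1 + x.2) - S x.1 - 1) : ℤ) : ℚ) < ((x.2 * (S (y.1 + y.2) - S y.1 + 1) : ℤ) : ℚ) := by
      exact_mod_cast this
    push_cast at this ⊢
    linarith
  obtain ⟨θ, ht1, ht2⟩ := exists_between hlt
  refine ⟨θ.den, θ.den_pos, θ.num, ?_⟩
  have hden : (0 : ℚ) < θ.den := by exact_mod_cast θ.den_pos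
  have hθ : (θ.num : ℚ) = θ * θ.den := (Rat.mul_den_eq_num θ).symm
  intro i hi j hj
  rcases lt_trichotomy i j with h | h | h
  · have hm : (i, j - i) ∈ I := by simp [I]; omega
    have h1 := (hxm _ hm).trans_lt ht1
    simp only [lo] at h1
    have hji : (0 : ℚ) < ((j - i : ℕ) : ℚ) := by exact_mod_cast (by omega : 0 < j - i)
    rw [div_lt_iff₀ hji, show i + (j - i) = j by omega] at h1
    rw [Nat.cast_sub h.le] at h1
    have : ((θ.den * (S j - S i) - θ.num * ((j : ℤ) - i) : ℤ) : ℚ) < ((θ.den : ℤ) : ℚ) := by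
      push_cast at h1 ⊢
      rw [hθ]
      nlinarith
    exact_mod_cast this
  · subst h
    simpa using θ.den_pos
  · have hm : (j, i - j) ∈ I := by simp [I]; omega
    have h1 := ht2.trans_le (hym _ hm)
    simp only [up] at h1
    have hji : (0 : ℚ) < ((i - j : ℕ) : ℚ) := by exact_mod_cast (by omega : 0 < i - j)
    rw [lt_div_iff₀ hji, show j + (i - j) = i by omega] at h1
    rw [Nat.cast_sub h.le] at h1
    have : ((θ.den * (S j - S i) - θ.num * ((j : ℤ) - i) : ℤ) : ℚ) < ((θ.den : ℤ) : ℚ) := by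
      push_cast at h1 ⊢
      rw [hθ]
      nlinarith
    exact_mod_cast this

/-- Mechanical form. -/
lemma Fits.mech {S : ℕ → ℤ} {n p : ℕ} {h : ℤ} (hp : 0 < p) (H : Fits S n p h) (h0 : S 0 = 0) :
    ∃ s : ℕ, ∀ i ≤ n, S i = ((s : ℤ) + i) * h / p - (s : ℤ) * h / p := by
  have hp0 : (0 : ℤ) < p := by exact_mod_cast hp
  obtain ⟨m, hm, hmm⟩ := Finset.exists_max_image (Finset.range (n + 1)) (fun x : ℕ => p * S x - h * x) ⟨0, by simp⟩
  simp only [Finset.mem_range, Nat.lt_succ_iff] at hm hmm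
  have key : ∀ i ≤ n, (((m * (p - 1) : ℕ) : ℤ) + i) * h / p = S i - S m + m * h := by
    intro i hi
    have h1 := hmm i hi
    have h2 := H i hi m hm
    rw [Int.ediv_eq_iff_of_pos hp0]
    push_cast [Nat.cast_sub (show 1 ≤ p from hp)]
    constructor <;> nlinarith
  refine ⟨m * (p - 1), fun i hi => ?_⟩
  have k0 := key 0 (by omega)
  rw [Nat.cast_zero, add_zero] at k0
  rw [key i hi, k0, h0]
  ring

/-- prefix sums -/
def PS (w : List Bool) (i : ℕ) : ℤ := ((w.take i).count true : ℤ)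

def chr (α β i : ℕ) : Bool := decide ((i + 1) * β / (α + β) ≠ i * β / (α + β))

lemma PS_zero (w : List Bool) : PS w 0 = 0 := by simp [PS]

lemma PS_length (w : List Bool) : PS w w.length = (w.count true : ℤ) := by simp [PS]

lemma PS_succ (w : List Bool) (i : ℕ) (hi : i < w.length) :
    PS w (i + 1) = PS w i + if w.getD i false then 1 else 0 := by
  unfold PS
  rw [List.take_add_one, List.count_append]
  rw [List.getD_eq_getElem?_getD, List.getElem?_eq_getElem hi]
  cases w[i] <;> simp

lemma PS_infix (w : List Bool) (i k : ℕ) : (((w.drop i).take k).count true : ℤ) = PS w (i + k) - PS w i := by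
  unfold PS
  rw [List.take_add, List.count_append]
  push_cast; ring

lemma infix_iff (u w : List Bool) : u <:+: w ↔ ∃ i, i + u.length ≤ w.length ∧ u = (w.drop i).take u.length := by
  constructor
  · rintro ⟨s, t, rfl⟩
    exact ⟨s.length, by simp, by simp⟩
  · rintro ⟨i, _, h⟩
    rw [h]
    exact (List.take_prefix _ _).isInfix.trans (List.drop_suffix _ _).isInfix

lemma balanced_iff (w : List Bool) : BalancedWord w ↔
    ∀ i j k, i + k ≤ w.length → j + k ≤ w.length → (PS w (i + k) - PS w i) - (PS w (j + k) - PS w j) ≤ 1 := by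
  constructor
  · intro h i j k hi hj
    have := h ((w.drop i).take k) ((w.drop j).take k)
      ((List.take_prefix _ _).isInfix.trans (List.drop_suffix _ _).isInfix)
      ((List.take_prefix _ _).isInfix.trans (List.drop_suffix _ _).isInfix)
      (by simp; omega)
    rw [PS_infix, PS_infix] at this
    exact (abs_le.1 this).2
  · intro h u v hu hv huv
    obtain ⟨i, hi, hu⟩ := (infix_iff u w).1 hu
    obtain ⟨j, hj, hv⟩ := (infix_iff v w).1 hv
    rw [hu, hv, PS_infix, PS_infix, ← huv]
    rw [← huv] at hj
    have h1 := h i j _ hi hj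
    have h2 := h j i _ hj hi
    rw [abs_le]; constructor <;> linarith

lemma PS_period {w : List Bool} {q : ℕ} (h : HasPeriod w q) :
    ∀ x, x + q ≤ w.length → PS w (x + q) = PS w x + PS w q := by
  intro x
  induction x with
  | zero => intro _; simp [PS_zero]
  | succ x ih =>
    intro hx
    have h1 := h.2 x (by omega)
    rw [show x + 1 + q = (x + q) + 1 by ring, PS_succ _ _ (by omega), PS_succ _ _ (by omega), ih (by omega), h1]
    ring

lemma period_of_PS {w : List Bool} {q : ℕ} (hq : 0 < q) {g : ℤ}
    (h : ∀ x, x + q ≤ w.length → PS w (x + q) = PS w x + g) : HasPeriod w q := by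
  refine ⟨hq, fun i hi => ?_⟩
  have h1 := h i (by omega)
  have h2 := h (i + 1) (by omega)
  rw [show i + 1 + q = (i + q) + 1 by ring, PS_succ _ _ (by omega), PS_succ _ _ (by omega), h1] at h2
  generalize w.getD i false = x at h2 ⊢
  generalize w.getD (i + q) false = y at h2 ⊢
  cases x <;> cases y <;> simp at h2 ⊢ <;> omega

lemma chr_add (α β i : ℕ) (hp : 0 < α + β) : chr α β (i + (α + β)) = chr α β i := by
  unfold chr
  have e : ∀ k, (k + (α + β)) * β / (α + β) = k * β / (α + β) + β := by
    intro k
    rw [add_mul, Nat.add_mul_div_left _ _ hp]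
  rw [show i + (α + β) + 1 = (i + 1) + (α + β) by ring, e, e]
  simp

lemma chr_val (α β i : ℕ) (hp : 0 < α + β) :
    ((i : ℤ) + 1) * β / ((α + β : ℕ) : ℤ) = (i : ℤ) * β / ((α + β : ℕ) : ℤ) + if chr α β i then 1 else 0 := by
  have h1 : i * β / (α + β) ≤ (i + 1) * β / (α + β) := Nat.div_le_div_right (by nlinarith)
  have h2 : (i + 1) * β / (α + β) ≤ i * β / (α + β) + 1 := by
    calc (i + 1) * β / (α + β) ≤ (i * β + (α + β)) / (α + β) := Nat.div_le_div_right (by nlinarith)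
      _ = _ := Nat.add_div_right _ hp
  have : (i + 1) * β / (α + β) = i * β / (α + β) + if chr α β i then 1 else 0 := by
    by_cases h : (i + 1) * β / (α + β) = i * β / (α + β)
    · simp [chr, h]
    · simp [chr, h]; omega
  have h3 := congrArg (fun x : ℕ => (x : ℤ)) this
  simpa using h3

lemma wpow_chr (α β m : ℕ) (hp : 0 < α + β) :
    wpow (lowerChristoffel α β) m = (List.range (m * (α + β))).map (chr α β) := by
  have hm : ∀ m i, chr α β (m * (α + β) + i) = chr α β i := by
    intro m i
    induction m with
    | zero => simp
    | succ m ih => rw [← ih, ← chr_add α β (m * (α + β) + i) hp]; congr 1; ring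
  induction m with
  | zero => simp [wpow]
  | succ m ih =>
    have : wpow (lowerChristoffel α β) (m + 1) = wpow (lowerChristoffel α β) m ++ lowerChristoffel α β := by
      simp [wpow, List.replicate_succ']
    rw [this, ih, add_mul, one_mul, List.range_add, List.map_append, List.map_map]
    congr 1
    unfold lowerChristoffel
    apply List.map_congr_left
    intro i _
    exact (hm m i).symm

lemma omega_iff_chr (α β : ℕ) (hp : 0 < α + β) (u : List Bool) :
    IsOmegaFactor u (lowerChristoffel α β) ↔ ∃ s, ∀ i < u.length, u.getD i false = chr α β (s + i) := by
  unfold IsOmegaFactor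
  constructor
  · rintro ⟨m, hm⟩
    rw [wpow_chr _ _ _ hp] at hm
    obtain ⟨s, hs, hu⟩ := (infix_iff _ _).1 hm
    simp at hs
    refine ⟨s, fun i hi => ?_⟩
    rw [hu, List.getD_eq_getElem?_getD, List.getElem?_take, if_pos hi]
    simp
    rw [List.getElem?_range (by omega)]
    simp
  · rintro ⟨s, hs⟩
    refine ⟨s + u.length, ?_⟩
    rw [wpow_chr _ _ _ hp, infix_iff]
    have hle : s + u.length ≤ (s + u.length) * (α + β) := Nat.le_mul_of_pos_right _ hp
    refine ⟨s, by simpa using hle, ?_⟩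
    apply List.ext_getElem
    · simp; omega
    · intro i h1 h2
      have := hs i h1
      rw [List.getD_eq_getElem _ _ h1] at this
      simp [this]

lemma omega_iff (α β : ℕ) (hp : 0 < α + β) (u : List Bool) :
    IsOmegaFactor u (lowerChristoffel α β) ↔ ∃ s : ℕ, ∀ i ≤ u.length,
      PS u i = ((s : ℤ) + i) * (β : ℤ) / ((α + β : ℕ) : ℤ) - (s : ℤ) * (β : ℤ) / ((α + β : ℕ) : ℤ) := by
  rw [omega_iff_chr _ _ hp]
  refine exists_congr fun s => ⟨fun h i => ?_, fun h i hi => ?_⟩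
  · induction i with
    | zero => intro _; simp [PS_zero]
    | succ i ih =>
      intro hi
      have hv := chr_val α β (s + i) hp
      rw [PS_succ _ _ (by omega), ih (by omega), h i (by omega)]
      push_cast at hv ⊢
      rw [← add_assoc, hv]
      ring
  · have h1 := h i hi.le
    have h2 := h (i + 1) hi
    have hv := chr_val α β (s + i) hp
    rw [PS_succ _ _ hi, h1] at h2
    push_cast at hv h2
    rw [← add_assoc, hv] at h2
    generalize u.getD i false = x at h2 ⊢
    generalize chr α β (s + i) = y at h2 ⊢
    cases x <;> cases y <;> simp at h2 ⊢ <;> omega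

/-- division difference bounds -/
lemma div_bounds (x k p : ℤ) (hp : 0 < p) : k / p ≤ (x + k) / p - x / p ∧ (x + k) / p - x / p ≤ k / p + 1 := by
  have a1 := Int.emod_add_mul_ediv x p
  have a2 := Int.emod_add_mul_ediv k p
  have a3 := Int.emod_add_mul_ediv (x + k) p
  have b1 := Int.emod_nonneg x hp.ne'
  have b2 := Int.emod_nonneg k hp.ne'
  have b3 := Int.emod_nonneg (x + k) hp.ne'
  have c1 := Int.emod_lt_of_pos x hp
  have c2 := Int.emod_lt_of_pos k hp
  have c3 := Int.emod_lt_of_pos (x + k) hp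
  constructor
  · by_contra hc
    have : (x + k) / p - x / p - k / p ≤ -1 := by omega
    nlinarith
  · by_contra hc
    have : 2 ≤ (x + k) / p - x / p - k / p := by omega
    nlinarith

lemma omega_bounds {α β : ℕ} (hp : 0 < α + β) {u : List Bool} (h : IsOmegaFactor u (lowerChristoffel α β)) 
    (i k : ℕ) (hk : i + k ≤ u.length) :
    (k : ℤ) * β / ((α + β : ℕ) : ℤ) ≤ PS u (i + k) - PS u i ∧
     PS u (i + k) - PS u i ≤ (k : ℤ) * β / ((α + β : ℕ) : ℤ) + 1 := by
  obtain ⟨s, hs⟩ := (omega_iff _ _ hp u).1 h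
  rw [hs _ hk, hs i (by omega)]
  have := div_bounds (((s : ℤ) + i) * β) (k * β) ((α + β : ℕ) : ℤ) (by exact_mod_cast hp)
  rw [← add_mul] at this
  push_cast at this ⊢
  rw [← add_assoc]
  constructor <;> linarith

lemma omega_exact {α β : ℕ} (hp : 0 < α + β) {u : List Bool} (h : IsOmegaFactor u (lowerChristoffel α β)) 
    (i k : ℕ) (hk : i + k ≤ u.length) (c : ℤ) (hd : (k : ℤ) * β = ((α + β : ℕ) : ℤ) * c) :
    PS u (i + k) - PS u i = c := by
  obtain ⟨s, hs⟩ := (omega_iff _ _ hp u).1 h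
  rw [hs _ hk, hs i (by omega)]
  have : ((s : ℤ) + (i + k : ℕ)) * β = (s + i) * β + ((α + β : ℕ) : ℤ) * c := by
    rw [← hd]; push_cast; ring
  rw [this, Int.add_mul_ediv_left _ _ (by exact_mod_cast hp.ne')]
  ring

lemma omega_balanced {α β : ℕ} (hp : 0 < α + β) {u : List Bool} (h : IsOmegaFactor u (lowerChristoffel α β)) :
    BalancedWord u := by
  rw [balanced_iff]
  intro i j k hi hj
  have h1 := omega_bounds hp h i k hi
  have h2 := omega_bounds hp h j k hj
  linarith

lemma PS_mono (w : List Bool) {i j : ℕ} (hij : i ≤ j) : PS w i ≤ PS w j ∧ PS w j - PS w i ≤ j - i := by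
  have e := PS_infix w i (j - i)
  rw [show i + (j - i) = j by omega] at e
  rw [← e]
  have h2 : ((w.drop i).take (j - i)).count true ≤ j - i := List.count_le_length.trans (by simp)
  have h1 : (0 : ℤ) ≤ (((w.drop i).take (j - i)).count true : ℤ) := by positivity
  constructor
  · linarith
  · omega

def TT (a b α β : ℕ) : Set (List Bool) :=
  {u | IsOmegaFactor u (lowerChristoffel α β) ∧ u.length = a + b ∧ IsMinPeriod u (α + β) ∧ u.count true = b}

lemma count_len (w : List Bool) : w.count false + w.count true = w.length := by
  induction w with
  | nil => rfl
  | cons x w ih => cases x <;> simp <;> omega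

lemma exists_T {a b : ℕ} (ha : 0 < a) (hb : 0 < b) {w : List Bool} (hw : BalancedWord w)
    (h0 : w.count false = a) (h1 : w.count true = b) :
    ∃ α β, 1 ≤ α ∧ α ≤ a ∧ 1 ≤ β ∧ β ≤ b ∧ w ∈ TT a b α β := by
  have hlen := count_len w
  have hn : 0 < w.length := by omega
  obtain ⟨p, h, hp, hpn, H, hmin⟩ := core hn (bal_fits hn ((balanced_iff w).1 hw))
  have hPp : PS w p = h := by
    have := H.period 0 (by omega)
    rw [PS_zero] at this; simpa using this
  have m1 := PS_mono w (Nat.zero_le p)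
  have m2 := PS_mono w hpn
  rw [PS_length] at m2
  rw [PS_zero] at m1
  have f1 := H 0 (by omega) w.length le_rfl
  have f2 := H w.length le_rfl 0 (by omega)
  rw [PS_length, PS_zero] at f1 f2
  have hp0 : (0 : ℤ) < p := by exact_mod_cast hp
  have hh0 : h ≠ 0 := by
    rintro rfl
    have : (1 : ℤ) ≤ w.count true := by omega
    nlinarith
  have hhp : h ≠ p := by
    rintro rfl
    have e : (w.length : ℤ) - w.count true = a := by omega
    have : (1 : ℤ) ≤ a := by omega
    push_cast at f2
    nlinarith
  obtain ⟨β, rfl⟩ : ∃ β : ℕ, h = β := ⟨h.toNat, by omega⟩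
  obtain ⟨α, rfl⟩ : ∃ α : ℕ, p = α + β := ⟨p - β, by omega⟩
  obtain ⟨s, hs⟩ := H.mech hp (PS_zero w)
  refine ⟨α, β, by omega, by omega, by omega, by omega, ?_, by omega, ⟨?_, ?_⟩, h1⟩
  · rw [omega_iff _ _ hp]
    exact ⟨s, hs⟩
  · exact period_of_PS hp H.period
  · intro q hq
    exact hmin q hq.1 _ (PS_period hq)

lemma T_unique {a b α β α' β' : ℕ} (h1 : α ≤ a) (h2 : β ≤ b) (hα : 1 ≤ α) (hα' : 1 ≤ α') {w : List Bool}
    (hw : w ∈ TT a b α β) (hw' : w ∈ TT a b α' β') : α = α' ∧ β = β' := by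
  obtain ⟨o, l, ⟨p, m⟩, c⟩ := hw
  obtain ⟨o', l', ⟨p', m'⟩, c'⟩ := hw'
  have e : α + β = α' + β' := le_antisymm (m _ p') (m' _ p)
  have e1 := omega_exact (by omega) o 0 (α + β) (by omega) β rfl
  have e2 := omega_exact (by omega) o' 0 (α' + β') (by omega) β' rfl
  rw [← e, e1] at e2
  omega

lemma T_sub {a b α β : ℕ} (hα : 1 ≤ α) {w : List Bool} (hw : w ∈ TT a b α β) : 
    BalancedWord w ∧ w.count false = a ∧ w.count true = b := by
  obtain ⟨o, l, _, c⟩ := hw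
  have := count_len w
  exact ⟨omega_balanced (by omega) o, by omega, c⟩

lemma finite_len (n : ℕ) (P : List Bool → Prop) (h : ∀ u, P u → u.length = n) : {u | P u}.Finite :=
  (List.finite_length_eq Bool n).subset h

lemma T_card {a b α β : ℕ} (ha : 0 < a) (hb : 0 < b) (hα : 1 ≤ α) :
    (TT a b α β).ncard =
      (if (α : ℚ) * ((b : ℚ) - 1) / ((a : ℚ) + 1) < (β : ℚ) ∧ (β : ℚ) ≤ (α : ℚ) * (b : ℚ) / (a : ℚ) then
        HFactors α β (a + b) else 0) +
      (if (β : ℚ) * ((a : ℚ) - 1) / ((b : ℚ) + 1) < (α : ℚ) ∧ (α : ℚ) ≤ (β : ℚ) * (a : ℚ) / (b : ℚ) then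
        (NFactors α β (a + b) - HFactors α β (a + b)) else 0) := by
  have hp : 0 < α + β := by omega
  have ha' : (0 : ℚ) < a := by exact_mod_cast ha
  have hb' : (0 : ℚ) < b := by exact_mod_cast hb
  have q1 : (α : ℚ) * ((b : ℚ) - 1) / ((a : ℚ) + 1) < (β : ℚ) ↔ α * b < β * (a + 1) + α := by
    rw [div_lt_iff₀ (by positivity)]
    rw [← Nat.cast_lt (α := ℚ)]; push_cast
    constructor <;> intro h <;> linarith
  have q2 : (β : ℚ) ≤ (α : ℚ) * (b : ℚ) / (a : ℚ) ↔ β * a ≤ α * b := by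
    rw [le_div_iff₀ ha']; exact_mod_cast Iff.rfl
  have q3 : (β : ℚ) * ((a : ℚ) - 1) / ((b : ℚ) + 1) < (α : ℚ) ↔ β * a < α * (b + 1) + β := by
    rw [div_lt_iff₀ (by positivity)]
    rw [← Nat.cast_lt (α := ℚ)]; push_cast
    constructor <;> intro h <;> linarith
  have q4 : (α : ℚ) ≤ (β : ℚ) * (a : ℚ) / (b : ℚ) ↔ α * b ≤ β * a := by
    rw [le_div_iff₀ hb']; exact_mod_cast Iff.rfl
  simp only [q1, q2, q3, q4]
  have cnt : ∀ u, IsOmegaFactor u (lowerChristoffel α β) → u.length = a + b →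
      u.count true = (a + b) * β / (α + β) ∨ u.count true = (a + b) * β / (α + β) + 1 := by
    intro u hu hl
    have h1 := omega_bounds hp hu 0 (a + b) (by omega)
    rw [zero_add, PS_zero, ← hl, PS_length, hl] at h1
    have e : (((a + b : ℕ) : ℤ) * β / ((α + β : ℕ) : ℤ)) = (((a + b) * β / (α + β) : ℕ) : ℤ) := by
      push_cast; rfl
    rw [e] at h1
    omega
  have cntx : ∀ c : ℕ, (a + b) * β = (α + β) * c → ∀ u, IsOmegaFactor u (lowerChristoffel α β) → u.length = a + b →
      u.count true = c := by
    intro c hc u hu hl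
    have h1 := omega_exact hp hu 0 (a + b) (by omega) c (by exact_mod_cast hc)
    rw [zero_add, PS_zero, ← hl, PS_length] at h1
    omega
  set f := (a + b) * β / (α + β) with hf
  have hNH : f = b → (TT a b α β).ncard = NFactors α β (a + b) - HFactors α β (a + b) := by
    intro hfb
    unfold NFactors HFactors
    rw [← Set.ncard_sdiff (hs := finite_len (a + b) _ (fun u h => h.2.1))]
    · congr 1
      ext u
      simp only [TT, Set.mem_ofPred_eq, Set.mem_sdiff, ← hf]
      constructor
      · rintro ⟨o, l, m, c⟩
        exact ⟨⟨o, l, m⟩, fun hh => by omega⟩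
      · rintro ⟨⟨o, l, m⟩, hh⟩
        refine ⟨o, l, m, ?_⟩
        rcases cnt u o l with h | h
        · omega
        · exact absurd ⟨o, l, m, h⟩ hh
    · rintro u ⟨o, l, m, _⟩
      exact ⟨o, l, m⟩
  have hH : f + 1 = b → (TT a b α β).ncard = HFactors α β (a + b) := by
    intro hfb
    unfold HFactors
    simp only [TT, ← hf, hfb]
  have hE : (∀ u, u ∉ TT a b α β) → (TT a b α β).ncard = 0 := by
    intro h
    rw [Set.eq_empty_of_forall_notMem h, Set.ncard_empty]
  have fle : ∀ c, c * (α + β) ≤ (a + b) * β → c ≤ f := fun c hc => (Nat.le_div_iff_mul_le hp).2 hc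
  have flt : ∀ c, (a + b) * β < c * (α + β) → f < c := fun c hc => (Nat.div_lt_iff_lt_mul hp).2 hc
  rcases lt_trichotomy (β * a) (α * b) with h | h | h
  · rw [if_neg (c := _ ∧ α * b ≤ β * a) (by omega), add_zero]
    have f1 := flt b (by nlinarith)
    rcases lt_trichotomy (α * b) (β * (a + 1) + α) with h2 | h2 | h2
    · rw [if_pos ⟨h2, h.le⟩]
      apply hH
      have := fle (b - 1) (by zify [show 1 ≤ b from hb]; zify at h2; nlinarith)
      omega
    · rw [if_neg (by omega)]
      apply hE
      rintro u ⟨o, l, _, c⟩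
      have := cntx (b - 1) (by zify [show 1 ≤ b from hb]; zify at h2; nlinarith) u o l
      omega
    · rw [if_neg (by omega)]
      apply hE
      rintro u ⟨o, l, _, c⟩
      have := flt (b - 1) (by zify [show 1 ≤ b from hb]; zify at h2; nlinarith)
      have := cnt u o l
      omega
  · have hfb : f = b := le_antisymm (Nat.lt_succ_iff.1 (flt (b + 1) (by nlinarith))) (fle b (by nlinarith))
    rw [if_pos ⟨by nlinarith, h.le⟩, if_pos ⟨by nlinarith, h.ge⟩, hNH hfb]
    have : HFactors α β (a + b) = 0 := by
      unfold HFactors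
      rw [Set.eq_empty_of_forall_notMem (s := {u | _}), Set.ncard_empty]
      rintro u ⟨o, l, _, c⟩
      have := cntx b (by nlinarith) u o l
      rw [← hf] at c
      omega
    omega
  · rw [if_neg (c := _ ∧ β * a ≤ α * b) (by omega), zero_add]
    have f1 := fle b (by nlinarith)
    by_cases h2 : β * a < α * (b + 1) + β
    · rw [if_pos ⟨h2, h.le⟩]
      apply hNH
      have := flt (b + 1) (by nlinarith)
      omega
    · rw [if_neg (by omega)]
      apply hE
      rintro u ⟨o, l, _, c⟩
      have := fle (b + 1) (by nlinarith)
      have := cnt u o l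
      omega

lemma main_pos {a b : ℕ} (ha : 0 < a) (hb : 0 < b) :
    Set.ncard {w : List Bool | BalancedWord w ∧ w.count false = a ∧ w.count true = b} =
      ∑ α ∈ Finset.Icc 1 a, ∑ β ∈ Finset.Icc 1 b, (TT a b α β).ncard := by
  classical
  have hfin : ∀ α β, (TT a b α β).Finite := fun α β => finite_len (a + b) _ (fun u h => h.2.1)
  have hset : {w : List Bool | BalancedWord w ∧ w.count false = a ∧ w.count true = b} =
      (((Finset.Icc 1 a ×ˢ Finset.Icc 1 b).biUnion fun x => (hfin x.1 x.2).toFinset : Finset (List Bool)) : Set (List Bool)) := by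
    ext w
    simp only [Set.mem_ofPred_eq, Finset.coe_biUnion, Set.mem_iUnion, Finset.mem_coe, Set.Finite.mem_toFinset,
      Finset.mem_product, Finset.mem_Icc]
    constructor
    · rintro ⟨h1, h2, h3⟩
      obtain ⟨α, β, c1, c2, c3, c4, h⟩ := exists_T ha hb h1 h2 h3
      exact ⟨(α, β), ⟨⟨c1, c2⟩, c3, c4⟩, h⟩
    · rintro ⟨x, hx, h⟩
      exact T_sub hx.1.1 h
  rw [hset, Set.ncard_coe_finset, Finset.card_biUnion, Finset.sum_product]
  · simp only [Set.ncard_eq_toFinset_card _ (hfin _ _)]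
  · rintro ⟨α, β⟩ hx ⟨α', β'⟩ hy hne
    simp only [Finset.mem_product, Finset.mem_Icc, Finset.mem_coe] at hx hy
    simp only [Function.onFun]
    rw [Finset.disjoint_left]
    intro w h1 h2
    simp only [Set.Finite.mem_toFinset] at h1 h2
    obtain ⟨rfl, rfl⟩ := T_unique hx.1.2 hx.2.2 hx.1.1 hy.1.1 h1 h2
    exact hne rfl

lemma main_zero {a b : ℕ} (h : (a = 0 ∧ 0 < b) ∨ (0 < a ∧ b = 0)) :
    Set.ncard {w : List Bool | BalancedWord w ∧ w.count false = a ∧ w.count true = b} = 1 := by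
  rw [Set.ncard_eq_one]
  have hb : ∀ (n : ℕ) (x : Bool), BalancedWord (List.replicate n x) := by
    intro n x u v hu hv huv
    obtain ⟨m, _, rfl⟩ : ∃ m, m ≤ n ∧ u = List.replicate m x :=
      ⟨u.length, by simpa using hu.length_le, List.eq_replicate_iff.2 ⟨rfl, fun y hy => (List.mem_replicate.1 (hu.subset hy)).2⟩⟩
    have : v = List.replicate m x := List.eq_replicate_iff.2 ⟨by simpa using huv.symm, fun y hy => (List.mem_replicate.1 (hv.subset hy)).2⟩
    rw [this]; simp
  have key : ∀ (w : List Bool) (x : Bool), w.count (!x) = 0 → w = List.replicate w.length x := by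
    intro w x hx
    refine List.eq_replicate_iff.2 ⟨rfl, fun y hy => ?_⟩
    rw [List.count_eq_zero] at hx
    by_contra hc
    have : y = !x := by cases x <;> cases y <;> simp_all
    exact hx (this ▸ hy)
  rcases h with ⟨rfl, h⟩ | ⟨h, rfl⟩
  · refine ⟨List.replicate b true, ?_⟩
    ext w
    simp only [Set.mem_ofPred_eq, Set.mem_singleton_iff]
    constructor
    · rintro ⟨_, h1, h2⟩
      have := count_len w
      rw [key w true h1]; congr 1; omega
    · rintro rfl
      exact ⟨hb _ _, by simp [List.count_replicate], by simp⟩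
  · refine ⟨List.replicate a false, ?_⟩
    ext w
    simp only [Set.mem_ofPred_eq, Set.mem_singleton_iff]
    constructor
    · rintro ⟨_, h1, h2⟩
      have := count_len w
      rw [key w false h2]; congr 1; omega
    · rintro rfl
      exact ⟨hb _ _, by simp, by simp [List.count_replicate]⟩

/-- Closed formula for the number of balanced binary words with Parikh
vector `(a, b)`. -/
theorem stmt12 (a b : ℕ) :
    (0 < a → 0 < b →
      Set.ncard {w : List Bool | BalancedWord w ∧ w.count false = a ∧ w.count true = b} =
        (∑ α ∈ Finset.Icc 1 a, ∑ β ∈ (Finset.Icc 1 b).filter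
            (fun β : ℕ => (α : ℚ) * ((b : ℚ) - 1) / ((a : ℚ) + 1) < (β : ℚ) ∧
              (β : ℚ) ≤ (α : ℚ) * (b : ℚ) / (a : ℚ)),
          HFactors α β (a + b)) +
        (∑ β ∈ Finset.Icc 1 b, ∑ α ∈ (Finset.Icc 1 a).filter
            (fun α : ℕ => (β : ℚ) * ((a : ℚ) - 1) / ((b : ℚ) + 1) < (α : ℚ) ∧
              (α : ℚ) ≤ (β : ℚ) * (a : ℚ) / (b : ℚ)),
          (NFactors α β (a + b) - HFactors α β (a + b)))) ∧
    ((a = 0 ∧ 0 < b) ∨ (0 < a ∧ b = 0) →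
      Set.ncard {w : List Bool | BalancedWord w ∧ w.count false = a ∧ w.count true = b}
        = 1) := by
  refine ⟨fun ha hb => ?_, main_zero⟩
  rw [main_pos ha hb]
  have e2 : (∑ β ∈ Finset.Icc 1 b, ∑ α ∈ (Finset.Icc 1 a).filter
            (fun α : ℕ => (β : ℚ) * ((a : ℚ) - 1) / ((b : ℚ) + 1) < (α : ℚ) ∧
              (α : ℚ) ≤ (β : ℚ) * (a : ℚ) / (b : ℚ)),
          (NFactors α β (a + b) - HFactors α β (a + b))) =
      ∑ α ∈ Finset.Icc 1 a, ∑ β ∈ Finset.Icc 1 b,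
        if (β : ℚ) * ((a : ℚ) - 1) / ((b : ℚ) + 1) < (α : ℚ) ∧
              (α : ℚ) ≤ (β : ℚ) * (a : ℚ) / (b : ℚ) then
          (NFactors α β (a + b) - HFactors α β (a + b)) else 0 := by
    rw [Finset.sum_comm]
    simp only [Finset.sum_filter]
  rw [e2]
  simp only [Finset.sum_filter]
  rw [← Finset.sum_add_distrib]
  refine Finset.sum_congr rfl fun α hα => ?_
  rw [← Finset.sum_add_distrib]
  refine Finset.sum_congr rfl fun β hβ => ?_
  exact T_card ha hb (Finset.mem_Icc.1 hα).1
end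

section
/- A binary word z is a minimal forbidden word for the language of balanced binary words (i.e., z is not balanced but every proper factor of z is balanced) if and only if there exist letters x, y with {x,y} = {0,1}, a binary word v, an integer m ≥ 2, and a primitive Christoffel word c such that z = y·v·x and x·v·y = c^m. -/
theorem core_aux (t : ℕ → ℤ) (n l : ℕ) (h0 : t 0 = 0) (hn : 3 ≤ n) (hl : 0 < l) (hln : 2 * l ≤ n)
    (sup : ∀ i j, i + j < n → t i + t j ≤ t (i + j))
    (sub' : ∀ i j k, 1 ≤ i → 1 ≤ j → i + k < n → j + k < n →
      t (i + k) - t i ≤ t (j + k) - t j + 1)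
    (suf : ∀ i j, 1 ≤ i → 1 ≤ j → i + j < n → t (n - i) + t (j + i) ≤ t n + t j)
    (hh : t n ≤ t l + t (n - l)) :
    (n : ℤ) * t l = l * t n ∧ ∀ i, i ≤ n → t i = (i * t l) / (l : ℤ) := by
  have hl' : (0 : ℤ) < l := by exact_mod_cast hl
  have e1 : t n = t l + t (n - l) := by
    have a := suf l 1 hl le_rfl (by omega)
    have b := sup 1 l (by omega)
    linarith
  have per : ∀ j, j + l < n → t (j + l) = t j + t l := by
    intro j hj
    rcases Nat.eq_zero_or_pos j with rfl | hj0
    · simp [h0]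
    · have a := suf l j hl hj0 (by omega)
      have b := sup j l hj
      linarith
  have sub : ∀ i j, i < l → j < l → t (i + j) ≤ t i + t j + 1 := by
    intro i j hi hj
    rcases Nat.eq_zero_or_pos j with rfl | hj0
    · simp [h0]
    · have a := sub' j l i hj0 hl (by omega) (by omega)
      have b := per i (by omega)
      rw [add_comm l i, add_comm j i] at a
      linarith
  have per2 : ∀ j, j < l → t (j + (n - l)) = t j + t (n - l) := by
    intro j hj
    rcases Nat.eq_zero_or_pos j with rfl | hj0
    · simp [h0]
    · have a := suf (n - l) j (by omega) hj0 (by omega)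
      have b := sup j (n - l) (by omega)
      rw [show n - (n - l) = l by omega] at a
      linarith
  obtain ⟨D, hD⟩ : ∃ D : ℕ → ℤ, ∀ i, D i = l * t (i % l) - ((i % l : ℕ) : ℤ) * t l :=
    ⟨_, fun i => rfl⟩
  have Dper : ∀ i j, i % l = j % l → D i = D j := by
    intro i j h
    rw [hD, hD, h]
  have Dlt : ∀ i, i < n → D i = l * t i - (i : ℤ) * t l := by
    intro i
    induction i using Nat.strong_induction_on with
    | _ i ih =>
      intro hi
      by_cases h : i < l
      · rw [hD, Nat.mod_eq_of_lt h]
      · obtain ⟨k, rfl⟩ : ∃ k, i = k + l := ⟨i - l, by omega⟩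
        rw [Dper (k + l) k (by simp), ih k (by omega) (by omega), per k hi]
        push_cast
        ring
  have Dmod : ∀ i, D i = D (i % l) := fun i => Dper _ _ (by simp)
  have red : ∀ i j, D (i + j) = D (i % l + j % l) := fun i j => Dper _ _ (by simp [Nat.add_mod])
  have D0 : D 0 = 0 := by simp [hD, h0]
  have ml : ∀ i, i % l < l := fun i => Nat.mod_lt _ hl
  have Dsup : ∀ i j, D i + D j ≤ D (i + j) := by
    intro i j
    have a := ml i
    have b := ml j
    rw [red, Dmod i, Dmod j, Dlt _ (by omega : i % l < n), Dlt _ (by omega : j % l < n),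
      Dlt _ (by omega : i % l + j % l < n)]
    have c := mul_le_mul_of_nonneg_left (sup (i % l) (j % l) (by omega)) hl'.le
    push_cast at c ⊢
    linarith
  have Dsub : ∀ i j, D (i + j) ≤ D i + D j + l := by
    intro i j
    have a := ml i
    have b := ml j
    rw [red, Dmod i, Dmod j, Dlt _ (by omega : i % l < n), Dlt _ (by omega : j % l < n),
      Dlt _ (by omega : i % l + j % l < n)]
    have c := mul_le_mul_of_nonneg_left (sub (i % l) (j % l) a b) hl'.le
    push_cast at c ⊢
    linarith
  have Dadd : ∀ i, D (i + (n - l)) = D i + D (n - l) := by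
    intro i
    have a := ml i
    rw [Dper (i + (n - l)) (i % l + (n - l)) (by simp), Dmod i, Dlt _ (by omega : i % l < n),
      Dlt _ (by omega : n - l < n), Dlt _ (by omega : i % l + (n - l) < n), per2 _ a]
    push_cast
    ring
  have m1 : ∀ i k : ℕ, (k : ℤ) * D i ≤ D (k * i) := by
    intro i k
    induction k with
    | zero => simp [D0]
    | succ k ih =>
      have := Dsup (k * i) i
      rw [show (k + 1) * i = k * i + i by ring]
      push_cast
      linarith
  have m2 : ∀ i k : ℕ, D (k * i) + l ≤ (k : ℤ) * (D i + l) + l := by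
    intro i k
    induction k with
    | zero => simp [D0]
    | succ k ih =>
      have := Dsub (k * i) i
      rw [show (k + 1) * i = k * i + i by ring]
      push_cast
      linarith
  have m2' : ∀ i k : ℕ, D ((k + 1) * i) + l ≤ ((k : ℤ) + 1) * (D i + l) := by
    intro i k
    induction k with
    | zero => simp
    | succ k ih =>
      have := Dsub ((k + 1) * i) i
      rw [show (k + 1 + 1) * i = (k + 1) * i + i by ring]
      push_cast
      linarith
  have m3 : ∀ k : ℕ, D (k * (n - l)) = (k : ℤ) * D (n - l) := by
    intro k
    induction k with
    | zero => simp [D0]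
    | succ k ih =>
      rw [show (k + 1) * (n - l) = k * (n - l) + (n - l) by ring, Dadd, ih]
      push_cast
      ring
  have Dl : ∀ i, D (l * i) = 0 := fun i => by rw [Dper (l * i) 0 (by simp), D0]
  have Dle : ∀ i, D i ≤ 0 := by
    intro i
    have := m1 i l
    rw [Dl] at this
    by_contra hc
    push Not at hc
    nlinarith
  have Dgt : ∀ i, -(l : ℤ) < D i := by
    intro i
    obtain ⟨k, rfl⟩ : ∃ k, l = k + 1 := ⟨l - 1, by omega⟩
    have := m2' i k
    rw [Dl] at this
    by_contra hc
    push Not at hc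
    push_cast at this hc hl'
    nlinarith
  have Dnl : D (n - l) = 0 := by
    have := m3 l
    rw [Dl] at this
    rcases mul_eq_zero.1 this.symm with h | h
    · omega
    · exact h
  have hfin : (n : ℤ) * t l = l * t n := by
    rw [Dlt _ (by omega)] at Dnl
    rw [e1]
    rw [Nat.cast_sub (by omega)] at Dnl
    linarith
  refine ⟨hfin, ?_⟩
  intro i hi
  rcases Nat.lt_or_ge i n with h | h
  · symm
    have a := Dle i
    have b := Dgt i
    rw [Dlt i h] at a b
    rw [Int.ediv_eq_iff_of_pos hl']
    constructor <;> linarith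
  · obtain rfl : i = n := by omega
    rw [hfin, Int.mul_ediv_cancel_left _ hl'.ne']

theorem core_s14 (t : ℕ → ℤ) (n l : ℕ) (h0 : t 0 = 0) (hn : 3 ≤ n) (hl : 0 < l) (hln : l < n)
    (sup : ∀ i j, i + j < n → t i + t j ≤ t (i + j))
    (sub' : ∀ i j k, 1 ≤ i → 1 ≤ j → i + k < n → j + k < n →
      t (i + k) - t i ≤ t (j + k) - t j + 1)
    (suf : ∀ i j, 1 ≤ i → 1 ≤ j → i + j < n → t (n - i) + t (j + i) ≤ t n + t j)
    (hh : t n ≤ t l + t (n - l)) (hpos : ∀ i, i ≤ n → 0 ≤ t i ∧ t i ≤ i) :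
    ∃ a b m : ℕ, Nat.Coprime a b ∧ 2 ≤ m ∧ n = m * (a + b) ∧
      ∀ i, i ≤ n → t i = ((i * b / (a + b) : ℕ) : ℤ) := by
  obtain ⟨l, hl, hln, hh⟩ : ∃ l, 0 < l ∧ 2 * l ≤ n ∧ t n ≤ t l + t (n - l) := by
    by_cases h : 2 * l ≤ n
    · exact ⟨l, hl, h, hh⟩
    · refine ⟨n - l, by omega, by omega, ?_⟩
      rw [show n - (n - l) = l by omega]
      linarith
  obtain ⟨e, ht⟩ := core_aux t n l h0 hn hl hln sup sub' suf hh
  obtain ⟨T, hT⟩ := Int.eq_ofNat_of_zero_le (hpos l (by omega)).1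
  obtain ⟨N, hN⟩ := Int.eq_ofNat_of_zero_le (hpos n (by omega)).1
  have hTl : T ≤ l := by have := (hpos l (by omega)).2; omega
  rw [hT, hN] at e
  have e' : n * T = l * N := by exact_mod_cast e
  obtain ⟨g, p, b, hg, hco, rfl, rfl⟩ := Nat.exists_coprime' (m := l) (n := T)
    (Nat.gcd_pos_of_pos_left _ hl)
  have hp : 0 < p := Nat.pos_of_mul_pos_right hl
  have hbp : b ≤ p := Nat.le_of_mul_le_mul_right hTl hg
  have e2 : n * b = p * N := by
    apply Nat.eq_of_mul_eq_mul_right hg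
    linarith
  obtain ⟨m, rfl⟩ : p ∣ n := hco.dvd_of_dvd_mul_right ⟨N, e2⟩
  refine ⟨p - b, b, m, ?_, ?_, ?_, ?_⟩
  · rwa [Nat.coprime_sub_self_left hbp]
  · by_contra hc
    have : m ≤ 1 := by omega
    nlinarith
  · rw [Nat.sub_add_cancel hbp]; ring
  · intro i hi
    rw [ht i hi, hT, Nat.sub_add_cancel hbp]
    push_cast
    rw [← mul_assoc, Int.mul_ediv_mul_of_pos_left _ _ (by exact_mod_cast hg)]

/-- Number of ones in the prefix of length `i`. -/
def pc (w : List Bool) (i : ℕ) : ℤ := ((w.take i).count true : ℤ)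

/-- Balance of increments of `f` on `[lo, hi]`. -/
def BalOn (f : ℕ → ℤ) (lo hi : ℕ) : Prop :=
  ∀ i j l, lo ≤ i → lo ≤ j → i + l ≤ hi → j + l ≤ hi → f (i + l) - f i ≤ f (j + l) - f j + 1

theorem pc_zero (w : List Bool) : pc w 0 = 0 := by simp [pc]

theorem count_drop_take (w : List Bool) (i l : ℕ) :
    (((w.drop i).take l).count true : ℤ) = pc w (i + l) - pc w i := by
  simp [pc, List.take_add]

theorem infix_iff_drop_take (u w : List Bool) :
    u <:+: w ↔ ∃ i l, i + l ≤ w.length ∧ u = (w.drop i).take l := by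
  constructor
  · rintro ⟨p, s, rfl⟩
    refine ⟨p.length, u.length, by simp, ?_⟩
    simp
  · rintro ⟨i, l, -, rfl⟩
    exact (List.take_prefix _ _).isInfix.trans (List.drop_suffix _ _).isInfix

theorem balanced_iff_s14 (w : List Bool) : BalancedWord w ↔ BalOn (pc w) 0 w.length := by
  constructor
  · intro h i j l _ _ hi hj
    have := h ((w.drop i).take l) ((w.drop j).take l)
      ((infix_iff_drop_take _ _).2 ⟨i, l, hi, rfl⟩) ((infix_iff_drop_take _ _).2 ⟨j, l, hj, rfl⟩)
      (by simp; omega)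
    rw [count_drop_take, count_drop_take, abs_le] at this
    linarith [this.2]
  · intro h u v hu hv huv
    obtain ⟨i, l, hi, rfl⟩ := (infix_iff_drop_take _ _).1 hu
    obtain ⟨j, l', hj, rfl⟩ := (infix_iff_drop_take _ _).1 hv
    simp only [List.length_take, List.length_drop] at huv
    obtain rfl : l = l' := by omega
    rw [count_drop_take, count_drop_take, abs_le]
    have a := h i j l (by omega) (by omega) hi hj
    have b := h j i l (by omega) (by omega) hj hi
    constructor <;> linarith

theorem balanced_factor_iff (w : List Bool) (i l : ℕ) (h : i + l ≤ w.length) :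
    BalancedWord ((w.drop i).take l) ↔ BalOn (pc w) i (i + l) := by
  have key : ∀ k, k ≤ l → pc ((w.drop i).take l) k = pc w (i + k) - pc w i := by
    intro k hk
    rw [← count_drop_take, pc, List.take_take, min_eq_left hk]
  have hlen : ((w.drop i).take l).length = l := by simp; omega
  rw [balanced_iff_s14, hlen]
  constructor
  · intro H a b k ha hb hak hbk
    have := H (a - i) (b - i) k (by omega) (by omega) (by omega) (by omega)
    rw [key _ (by omega), key _ (by omega), key _ (by omega), key _ (by omega)] at this
    rw [show i + (a - i + k) = a + k by omega, show i + (b - i + k) = b + k by omega,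
      show i + (a - i) = a by omega, show i + (b - i) = b by omega] at this
    linarith
  · intro H a b k _ _ ha hb
    have := H (i + a) (i + b) k (by omega) (by omega) (by omega) (by omega)
    rw [key _ (by omega), key _ (by omega), key _ (by omega), key _ (by omega)]
    rw [← add_assoc, ← add_assoc]
    linarith

theorem BalOn.mono {f : ℕ → ℤ} {a b c d : ℕ} (h : BalOn f a b) (h1 : a ≤ c) (h2 : d ≤ b) :
    BalOn f c d := by
  intro i j l hi hj hi' hj'
  exact h i j l (by omega) (by omega) (by omega) (by omega)

/-- Minimal forbidden word. -/
def MinForb (z : List Bool) : Prop :=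
  ¬ BalancedWord z ∧ ∀ u : List Bool, u <:+: z → u ≠ z → BalancedWord u

theorem minForb_iff (z : List Bool) :
    MinForb z ↔ ¬ BalOn (pc z) 0 z.length ∧ BalOn (pc z) 0 (z.length - 1) ∧
      BalOn (pc z) 1 z.length := by
  unfold MinForb
  rw [balanced_iff_s14]
  refine and_congr_right fun hz => ?_
  have hpos : 1 ≤ z.length := by
    by_contra hc
    apply hz
    intro i j l _ _ hi hj
    have : i = 0 := by omega
    have : j = 0 := by omega
    subst_vars
    simp
  constructor
  · intro H
    constructor
    · have := (balanced_factor_iff z 0 (z.length - 1) (by omega)).1 (H _ ?_ ?_)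
      · simpa using this
      · exact (infix_iff_drop_take _ _).2 ⟨_, _, by omega, rfl⟩
      · intro h
        have := congrArg List.length h
        simp at this
        omega
    · have := (balanced_factor_iff z 1 (z.length - 1) (by omega)).1 (H _ ?_ ?_)
      · rwa [Nat.add_sub_cancel' hpos] at this
      · exact (infix_iff_drop_take _ _).2 ⟨_, _, by omega, rfl⟩
      · intro h
        have := congrArg List.length h
        simp at this
        omega
  · rintro ⟨H1, H2⟩ u hu hne
    obtain ⟨i, l, hi, rfl⟩ := (infix_iff_drop_take _ _).1 hu
    rw [balanced_factor_iff z i l hi]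
    rcases Nat.eq_zero_or_pos i with rfl | hi0
    · refine H1.mono le_rfl ?_
      rcases Nat.lt_or_ge l z.length with h | h
      · omega
      · exact absurd (by simp [List.take_of_length_le h]) hne
    · exact H2.mono hi0 hi

theorem pc_succ (w : List Bool) (i : ℕ) (h : i < w.length) :
    pc w (i + 1) = pc w i + if w[i] = true then 1 else 0 := by
  unfold pc
  rw [List.take_succ_eq_append_getElem h, List.count_append]
  cases w[i] <;> simp

theorem pc_step (w : List Bool) (i : ℕ) : pc w i ≤ pc w (i + 1) ∧ pc w (i + 1) ≤ pc w i + 1 := by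
  by_cases h : i < w.length
  · rw [pc_succ w i h]
    split_ifs <;> constructor <;> linarith
  · unfold pc
    rw [List.take_of_length_le (by omega), List.take_of_length_le (by omega)]
    constructor <;> linarith

theorem pc_mono (w : List Bool) : Monotone (pc w) :=
  monotone_nat_of_le_succ fun i => (pc_step w i).1

theorem eq_of_pc (w w' : List Bool) (hl : w.length = w'.length)
    (h : ∀ i, i ≤ w.length → pc w i = pc w' i) : w = w' := by
  refine List.ext_getElem hl fun i h1 h2 => ?_
  have a := pc_succ w i h1
  have b := pc_succ w' i h2
  rw [h _ (by omega), h _ (by omega), b] at a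
  cases h3 : w[i] <;> cases h4 : w'[i] <;> simp [h3, h4] at a ⊢

theorem pc_not (w : List Bool) (i : ℕ) (h : i ≤ w.length) : pc (w.map (!·)) i = i - pc w i := by
  induction i with
  | zero => simp [pc]
  | succ i ih =>
    rw [pc_succ _ _ (by simpa using h), pc_succ _ _ (by omega), ih (by omega)]
    rw [List.getElem_map]
    cases w[i] <;> simp <;> ring

theorem balOn_not (w : List Bool) (lo hi : ℕ) (h : hi ≤ w.length) (H : BalOn (pc w) lo hi) :
    BalOn (pc (w.map (!·))) lo hi := by
  intro i j l h1 h2 h3 h4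
  rw [pc_not _ _ (by omega), pc_not _ _ (by omega), pc_not _ _ (by omega), pc_not _ _ (by omega)]
  have := H j i l h2 h1 h4 h3
  push_cast
  linarith

theorem map_not_not (w : List Bool) : (w.map (!·)).map (!·) = w := by
  rw [List.map_map]
  simp [Function.comp_def]

theorem minForb_not (z : List Bool) (h : MinForb z) : MinForb (z.map (!·)) := by
  rw [minForb_iff] at h ⊢
  rw [List.length_map]
  refine ⟨fun hc => h.1 ?_, balOn_not _ _ _ (by omega) h.2.1, balOn_not _ _ _ le_rfl h.2.2⟩
  have := balOn_not _ _ _ (by simp) hc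
  rwa [map_not_not] at this

/-- The right hand side. -/
def Rhs (z : List Bool) : Prop :=
  ∃ (x y : Bool) (v c : List Bool) (m : ℕ), x ≠ y ∧ 2 ≤ m ∧
      IsPrimitiveChristoffel c ∧ z = y :: v ++ [x] ∧ x :: v ++ [y] = wpow c m

theorem wpow_not (c : List Bool) (m : ℕ) : wpow (c.map (!·)) m = (wpow c m).map (!·) := by
  simp [wpow, List.map_flatten]

theorem ceil_floor (a b i : ℕ) (h : 0 < a + b) :
    (i * b + (a + b) - 1) / (a + b) + i * a / (a + b) = i := by
  have e : i * a + i * b = (a + b) * i := by ring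
  have h1 := Nat.div_add_mod (i * a) (a + b)
  have h2 := Nat.mod_lt (i * a) h
  set q := i * a / (a + b)
  set r := i * a % (a + b)
  have hq : q ≤ i := by
    apply Nat.le_of_mul_le_mul_left _ h
    omega
  have : (i * b + (a + b) - 1) / (a + b) = i - q := by
    have e2 : (a + b) * (i - q) + (a + b) * q = (a + b) * i := by
      rw [← mul_add, Nat.sub_add_cancel hq]
    rw [Nat.div_eq_iff h]
    have e3 : (i - q) * (a + b) = (a + b) * (i - q) := mul_comm _ _
    constructor <;> omega
  omega

theorem floor_step (a b i : ℕ) (h : 0 < a + b) :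
    i * b / (a + b) ≤ (i + 1) * b / (a + b) ∧ (i + 1) * b / (a + b) ≤ i * b / (a + b) + 1 := by
  constructor
  · exact Nat.div_le_div_right (by nlinarith)
  · rw [← Nat.add_div_right _ h]
    exact Nat.div_le_div_right (by nlinarith)

theorem lower_not (a b : ℕ) : (lowerChristoffel a b).map (!·) = upperChristoffel b a := by
  unfold lowerChristoffel upperChristoffel
  rw [List.map_map, add_comm b a]
  apply List.map_congr_left
  intro i hi
  have hp : 0 < a + b := by
    have := List.mem_range.1 hi
    omega
  have h1 := ceil_floor b a i (by omega)
  have h2 := ceil_floor b a (i + 1) (by omega)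
  rw [add_comm b a] at h1 h2
  have h3 := floor_step a b i hp
  simp only [Function.comp]
  rw [← decide_not, decide_eq_decide]
  omega

theorem prim_not (c : List Bool) (h : IsPrimitiveChristoffel c) :
    IsPrimitiveChristoffel (c.map (!·)) := by
  obtain ⟨a, b, hco, rfl | rfl⟩ := h
  · exact ⟨b, a, hco.symm, Or.inr (lower_not a b)⟩
  · refine ⟨b, a, hco.symm, Or.inl ?_⟩
    rw [← lower_not, map_not_not]

theorem rhs_not (z : List Bool) (h : Rhs z) : Rhs (z.map (!·)) := by
  obtain ⟨x, y, v, c, m, hxy, hm, hc, rfl, hv⟩ := h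
  refine ⟨!x, !y, v.map (!·), c.map (!·), m, by simpa using hxy, hm, prim_not c hc, by simp, ?_⟩
  rw [wpow_not, ← hv]
  simp

theorem wpow_lower (a b m : ℕ) : wpow (lowerChristoffel a b) m =
    (List.range (m * (a + b))).map
      fun i => decide ((i + 1) * b / (a + b) ≠ i * b / (a + b)) := by
  rcases Nat.eq_zero_or_pos (a + b) with h | h
  · have : a = 0 := by omega
    have : b = 0 := by omega
    subst_vars
    simp [wpow, lowerChristoffel]
  induction m with
  | zero => simp [wpow]
  | succ m ih =>
    have : wpow (lowerChristoffel a b) (m + 1)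
      = lowerChristoffel a b ++ wpow (lowerChristoffel a b) m := by
      simp [wpow, List.replicate_succ]
    rw [this, ih, show (m + 1) * (a + b) = (a + b) + m * (a + b) by ring, List.range_add,
      List.map_append, List.map_map, lowerChristoffel]
    congr 1
    apply List.map_congr_left
    intro i _
    simp only [Function.comp]
    rw [show (a + b + i + 1) * b = (i + 1) * b + (a + b) * b by ring,
      show (a + b + i) * b = i * b + (a + b) * b by ring, Nat.add_mul_div_left _ _ h,
      Nat.add_mul_div_left _ _ h]
    simp

theorem length_wpow_lower (a b m : ℕ) : (wpow (lowerChristoffel a b) m).length = m * (a + b) := by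
  rw [wpow_lower]; simp

theorem pc_wpow_lower (a b m i : ℕ) (hi : i ≤ m * (a + b)) :
    pc (wpow (lowerChristoffel a b) m) i = ((i * b / (a + b) : ℕ) : ℤ) := by
  induction i with
  | zero => simp [pc]
  | succ i ih =>
    have h : 0 < a + b := by
      rcases Nat.eq_zero_or_pos (a + b) with h | h
      · rw [h] at hi; omega
      · exact h
    rw [pc_succ _ _ (by rw [length_wpow_lower]; omega), ih (by omega)]
    have := floor_step a b i h
    simp only [wpow_lower, List.getElem_map, List.getElem_range, decide_eq_true_eq]
    split_ifs with h1 <;> omega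

theorem pc_swap (v : List Bool) (i : ℕ) (h1 : 1 ≤ i) (h2 : i ≤ v.length + 1) :
    pc (true :: v ++ [false]) i = pc (false :: v ++ [true]) i + 1 := by
  obtain ⟨i, rfl⟩ : ∃ k, i = k + 1 := ⟨i - 1, by omega⟩
  simp only [pc, List.cons_append, List.take_succ_cons]
  rw [List.take_append_of_le_length (by omega), List.take_append_of_le_length (by omega)]
  simp

theorem pc_swap_end (v : List Bool) :
    pc (true :: v ++ [false]) (v.length + 2) = pc (false :: v ++ [true]) (v.length + 2) := by
  unfold pc
  rw [List.take_of_length_le (by simp), List.take_of_length_le (by simp)]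
  simp

theorem pc_le (w : List Bool) (i : ℕ) : 0 ≤ pc w i ∧ pc w i ≤ i := by
  unfold pc
  have := List.count_le_length (a := true) (l := w.take i)
  simp only [List.length_take] at this
  omega

theorem fwd (z : List Bool) (H1 : BalOn (pc z) 0 (z.length - 1)) (H2 : BalOn (pc z) 1 z.length)
    (l : ℕ) (hl : l ≤ z.length) (hh : pc z z.length + 2 ≤ pc z l + pc z (z.length - l)) :
    Rhs z := by
  obtain ⟨n, hn⟩ : ∃ n, n = z.length := ⟨_, rfl⟩
  rw [← hn] at H1 H2 hl hh
  have h0 := pc_zero z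
  have hl0 : 0 < l := by
    rcases Nat.eq_zero_or_pos l with rfl | h
    · rw [h0] at hh
      simp at hh
    · exact h
  have hln : l < n := by
    rcases Nat.lt_or_ge l n with h | h
    · exact h
    · obtain rfl : l = n := by omega
      simp [h0] at hh
  have hp1 : pc z 1 = 1 := by
    have a := H2 1 (n - l + 1) (l - 1) (by omega) (by omega) (by omega) (by omega)
    rw [show 1 + (l - 1) = l by omega, show n - l + 1 + (l - 1) = n by omega] at a
    have b := (pc_step z (n - l)).1
    have c := (pc_le z 1).2
    push_cast at c
    linarith
  have hpn : pc z n = pc z (n - 1) := by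
    have a := H1 0 (n - l) (l - 1) (by omega) (by omega) (by omega) (by omega)
    rw [show 0 + (l - 1) = l - 1 by omega, show n - l + (l - 1) = n - 1 by omega] at a
    have b := (pc_step z (l - 1)).2
    rw [show l - 1 + 1 = l by omega] at b
    have c := (pc_step z (n - 1)).1
    rw [show n - 1 + 1 = n by omega] at c
    linarith
  have hn3 : 3 ≤ n := by
    by_contra hc
    obtain rfl : n = 2 := by omega
    obtain rfl : l = 1 := by omega
    simp only [Nat.reduceSub] at hh hpn
    linarith
  obtain ⟨v, rfl⟩ : ∃ v, z = true :: v ++ [false] := by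
    cases z with
    | nil => simp at hn; omega
    | cons a z' =>
      rcases List.eq_nil_or_concat z' with rfl | ⟨v, x, rfl⟩
      · simp at hn; omega
      · refine ⟨v, ?_⟩
        have ha : a = true := by
          cases a
          · simp [pc] at hp1
          · rfl
        have hx : x = false := by
          cases x
          · rfl
          · exfalso
            simp at hn
            subst hn
            simp [pc, List.take_of_length_le, List.count_cons] at hpn
        rw [ha, hx]
        simp
  have hnv : n = v.length + 2 := by simpa using hn
  have tt : ∀ i, 1 ≤ i → i < n →
      pc (true :: v ++ [false]) i = pc (false :: v ++ [true]) i + 1 :=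
    fun i h1 h2 => pc_swap v i h1 (by omega)
  have tn : pc (true :: v ++ [false]) n = pc (false :: v ++ [true]) n := by
    rw [hnv]; exact pc_swap_end v
  have t0 := pc_zero (false :: v ++ [true])
  obtain ⟨a, b, m, hco, hm, hnm, ht⟩ := core_s14 (pc (false :: v ++ [true])) n l t0 hn3 hl0 hln
    (by
      intro i j hij
      rcases Nat.eq_zero_or_pos i with rfl | hi
      · simp [pc_zero]
      rcases Nat.eq_zero_or_pos j with rfl | hj
      · simp [pc_zero]
      have a := H1 0 j i (by omega) (by omega) (by omega) (by omega)
      rw [zero_add, h0, add_comm j i, tt _ (by omega) (by omega), tt _ (by omega) (by omega),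
        tt _ (by omega) (by omega)] at a
      linarith)
    (by
      intro i j k hi hj hik hjk
      have a := H2 i j k hi hj (by omega) (by omega)
      rw [tt _ (by omega) (by omega), tt _ (by omega) (by omega), tt _ (by omega) (by omega),
        tt _ (by omega) (by omega)] at a
      linarith)
    (by
      intro i j hi hj hij
      have a := H2 j (n - i) i (by omega) (by omega) (by omega) (by omega)
      rw [show n - i + i = n by omega, tn, tt _ (by omega) (by omega),
        tt _ (by omega) (by omega), tt _ (by omega) (by omega)] at a
      linarith)
    (by
      rw [tn, tt _ (by omega) (by omega), tt _ (by omega) (by omega)] at hh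
      linarith)
    (fun i _ => pc_le _ i)
  refine ⟨false, true, v, lowerChristoffel a b, m, by simp, hm, ⟨a, b, hco, Or.inl rfl⟩, rfl, ?_⟩
  have hlen : (false :: v ++ [true]).length = n := by simp [hnv]
  apply eq_of_pc
  · rw [hlen, length_wpow_lower, hnm]
  · intro i hi
    rw [hlen] at hi
    rw [ht i hi, pc_wpow_lower _ _ _ _ (by omega)]

theorem fwd_all (z : List Bool) (h : MinForb z) : Rhs z := by
  have hz := h
  rw [minForb_iff] at h
  obtain ⟨h, H1, H2⟩ := h
  unfold BalOn at h
  push Not at h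
  obtain ⟨i, j, l, -, -, hi, hj, hlt⟩ := h
  have c1 : ¬ (i + l ≤ z.length - 1 ∧ j + l ≤ z.length - 1) := fun hc => by
    have := H1 i j l (by omega) (by omega) hc.1 hc.2
    linarith
  have c2 : ¬ (1 ≤ i ∧ 1 ≤ j) := fun hc => by
    have := H2 i j l hc.1 hc.2 hi hj
    linarith
  have c3 : i ≠ j := by
    rintro rfl
    linarith
  have h0 := pc_zero z
  by_cases hi0 : i = 0
  · subst hi0
    have hj' : j = z.length - l := by omega
    subst hj'
    rw [zero_add, Nat.sub_add_cancel (by omega), h0] at hlt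
    exact fwd z H1 H2 l (by omega) (by omega)
  · have hj0 : j = 0 := by omega
    subst hj0
    have hi' : i = z.length - l := by omega
    subst hi'
    rw [zero_add, Nat.sub_add_cancel (by omega), h0] at hlt
    have hz' := (minForb_iff _).1 (minForb_not z hz)
    have := fwd (z.map (!·)) hz'.2.1 hz'.2.2 l (by simp; omega) (by
      rw [List.length_map, pc_not _ _ (by omega), pc_not _ _ (by omega), pc_not _ _ (by omega)]
      rw [Nat.cast_sub (by omega)]
      linarith)
    have := rhs_not _ this
    rwa [map_not_not] at this

theorem floor_add (a b i j : ℕ) (h : 0 < a + b) :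
    i * b / (a + b) + j * b / (a + b) ≤ (i + j) * b / (a + b) ∧
    (i + j) * b / (a + b) ≤ i * b / (a + b) + j * b / (a + b) + 1 := by
  rw [add_mul]
  constructor
  · exact Nat.div_add_div_le_add_div
  · rw [Nat.add_div h]
    split_ifs <;> omega

theorem floor_add_period (a b m j : ℕ) (h : 0 < a + b) :
    (m * (a + b) + j) * b / (a + b) = m * (a + b) * b / (a + b) + j * b / (a + b) := by
  rw [show (m * (a + b) + j) * b = j * b + (a + b) * (m * b) by ring,
    show m * (a + b) * b = (a + b) * (m * b) by ring, Nat.add_mul_div_left _ _ h,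
    Nat.mul_div_cancel_left _ h, add_comm]

theorem bwd_lower (v : List Bool) (a b m : ℕ) (hm : 2 ≤ m)
    (hv : false :: v ++ [true] = wpow (lowerChristoffel a b) m) :
    MinForb (true :: v ++ [false]) := by
  have hlen := congrArg List.length hv
  rw [length_wpow_lower] at hlen
  simp only [List.length_append, List.length_cons, List.length_nil] at hlen
  have hp : 0 < a + b := by
    rcases Nat.eq_zero_or_pos (a + b) with h | h
    · rw [h] at hlen; omega
    · exact h
  obtain ⟨F, hF⟩ : ∃ F : ℕ → ℕ, ∀ i, F i = i * b / (a + b) := ⟨_, fun _ => rfl⟩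
  obtain ⟨n, hn⟩ : ∃ n, n = m * (a + b) := ⟨_, rfl⟩
  have Fadd : ∀ i j, F i + F j ≤ F (i + j) ∧ F (i + j) ≤ F i + F j + 1 := by
    intro i j
    rw [hF, hF, hF]
    exact floor_add a b i j hp
  have Fper : ∀ j, F (n + j) = F n + F j := by
    intro j
    rw [hF, hF, hF, hn]
    exact floor_add_period a b m j hp
  have ht : ∀ i, 1 ≤ i → i < n → pc (true :: v ++ [false]) i = F i + 1 := by
    intro i h1 h2
    rw [pc_swap v i h1 (by omega), hv, pc_wpow_lower _ _ _ _ (by omega), hF]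
  have htn : pc (true :: v ++ [false]) n = F n := by
    rw [show n = v.length + 2 by omega, pc_swap_end, hv, pc_wpow_lower _ _ _ _ (by omega), hF]
  have h0 := pc_zero (true :: v ++ [false])
  have hl : (true :: v ++ [false]).length = n := by simp; omega
  have F0 : F 0 = 0 := by simp [hF]
  rw [minForb_iff, hl]
  refine ⟨?_, ?_, ?_⟩
  · intro H
    have hpn : 2 * (a + b) ≤ n := by rw [hn]; exact Nat.mul_le_mul_right _ hm
    have := H 0 (n - (a + b)) (a + b) (by omega) (by omega) (by omega) (by omega)
    rw [zero_add, Nat.sub_add_cancel (by omega), h0, htn, ht _ (by omega) (by omega),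
      ht _ (by omega) (by omega)] at this
    have e := floor_add_period a b 1 (n - (a + b)) hp
    rw [one_mul, ← hF, ← hF, ← hF, Nat.add_sub_cancel' (by omega)] at e
    omega
  · intro i j l _ _ hi hj
    rcases Nat.eq_zero_or_pos l with rfl | hl0
    · simp
    have e1 := Fadd i l
    have e2 := Fadd j l
    rcases Nat.eq_zero_or_pos i with rfl | hi0 <;> rcases Nat.eq_zero_or_pos j with rfl | hj0
    · linarith
    · rw [h0, zero_add, ht _ (by omega) (by omega), ht _ (by omega) (by omega),
        ht _ (by omega) (by omega)]
      omega
    · rw [h0, zero_add, ht _ (by omega) (by omega), ht _ (by omega) (by omega),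
        ht _ (by omega) (by omega)]
      omega
    · rw [ht _ (by omega) (by omega), ht _ (by omega) (by omega),
        ht _ (by omega) (by omega), ht _ (by omega) (by omega)]
      omega
  · intro i j l hi1 hj1 hi hj
    rcases Nat.eq_zero_or_pos l with rfl | hl0
    · simp
    have e1 := Fadd i l
    have e2 := Fadd j l
    have e3 := Fadd (i + l) (n - l)
    have e4 := Fadd (j + l) (n - l)
    rw [show i + l + (n - l) = n + i by omega, Fper] at e3
    rw [show j + l + (n - l) = n + j by omega, Fper] at e4
    by_cases hi' : i + l = n <;> by_cases hj' : j + l = n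
    · obtain rfl : i = j := by omega
      linarith
    · rw [hi', htn, ht _ (by omega) (by omega), ht _ (by omega) (by omega),
        ht _ (by omega) (by omega)]
      rw [show i = n - l by omega]
      omega
    · rw [hj', htn, ht _ (by omega) (by omega), ht _ (by omega) (by omega),
        ht _ (by omega) (by omega)]
      rw [show j = n - l by omega]
      omega
    · rw [ht _ (by omega) (by omega), ht _ (by omega) (by omega),
        ht _ (by omega) (by omega), ht _ (by omega) (by omega)]
      omega

theorem bwd_lower' (x y : Bool) (v : List Bool) (a b m : ℕ) (hm : 2 ≤ m) (hxy : x ≠ y)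
    (hv : x :: v ++ [y] = wpow (lowerChristoffel a b) m) :
    MinForb (y :: v ++ [x]) := by
  cases x <;> cases y
  · simp at hxy
  · exact bwd_lower v a b m hm hv
  · exfalso
    have hlen := congrArg List.length hv
    rw [length_wpow_lower] at hlen
    simp only [List.length_append, List.length_cons, List.length_nil] at hlen
    have hp : 0 < a + b := by
      rcases Nat.eq_zero_or_pos (a + b) with h | h
      · rw [h] at hlen; omega
      · exact h
    have e1 : pc (true :: v ++ [false]) 1 = 1 := by simp [pc]
    have e2 : pc (true :: v ++ [false]) (v.length + 1 + 1) =
        pc (true :: v ++ [false]) (v.length + 1) := by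
      simp [pc, List.take_of_length_le]
    have e3 := (floor_add a b (v.length + 1) 1 hp).1
    rw [hv, pc_wpow_lower _ _ _ _ (by omega)] at e1
    rw [hv, pc_wpow_lower _ _ _ _ (by omega), pc_wpow_lower _ _ _ _ (by omega)] at e2
    omega
  · simp at hxy

theorem bwd_all (z : List Bool) (h : Rhs z) : MinForb z := by
  obtain ⟨x, y, v, c, m, hxy, hm, ⟨a, b, -, rfl | rfl⟩, rfl, hv⟩ := h
  · exact bwd_lower' x y v a b m hm hxy hv
  · have : MinForb ((!y) :: v.map (!·) ++ [!x]) := by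
      apply bwd_lower' (!x) (!y) (v.map (!·)) b a m hm (by simpa using hxy)
      rw [← lower_not, wpow_not] at hv
      have := congrArg (List.map (!·)) hv
      rw [map_not_not] at this
      rw [← this]
      simp
    have := minForb_not _ this
    have e : ((!y) :: v.map (!·) ++ [!x]) = (y :: v ++ [x]).map (!·) := by simp
    rwa [e, map_not_not] at this

/-- The minimal forbidden words for the language of balanced words are
exactly the words `y·v·x` with `{x,y} = {0,1}` and `x·v·y` a non-primitive power of a
primitive Christoffel word. -/
theorem stmt14 (z : List Bool) :
    (¬ BalancedWord z ∧ ∀ u : List Bool, u <:+: z → u ≠ z → BalancedWord u) ↔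
    ∃ (x y : Bool) (v c : List Bool) (m : ℕ), x ≠ y ∧ 2 ≤ m ∧
      IsPrimitiveChristoffel c ∧ z = y :: v ++ [x] ∧ x :: v ++ [y] = wpow c m := by
  exact ⟨fwd_all z, bwd_all z⟩
end

section
/- Let S₁ be the set of binary words of the form u²v² or (u²v²)^R, where w = u·v is the standard factorization of a primitive lower Christoffel word w of length at least 2, and let S₂ be the set of binary words of the form y·w·x where {x,y} = {0,1} and x·w·y is the square of a primitive Christoffel word. Then S₁ = S₂. -/
/-- `w = u ++ v` is the standard factorization of the Lyndon word `w`: `v` is the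
lexicographically least nonempty proper suffix of `w`. -/
def StdFact (w u v : List Bool) : Prop :=
  w = u ++ v ∧ u ≠ [] ∧ v ≠ [] ∧
    ∀ s : List Bool, s ≠ [] → s ≠ w → s <:+ w → (v = s ∨ List.Lex (· < ·) v s)

/-- Letter of the rotation with residue `x`. -/
def rotL (n b x : ℕ) : Bool := decide (n ≤ x % n + b)

/-- Word of length `m` read from residue `r`. -/
def rotS (n b r m : ℕ) : List Bool := (List.range m).map fun j => rotL n b (r + j * b)

lemma rotS_succ (n b r m : ℕ) : rotS n b r (m+1) = rotL n b r :: rotS n b (r + b) m := by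
  simp only [rotS, List.range_succ_eq_map, List.map_cons, List.map_map]
  simp only [zero_mul, add_zero, List.cons.injEq, true_and]
  apply List.map_congr_left
  intro j _
  simp only [Function.comp]
  congr 1
  rw [Nat.succ_eq_add_one]
  ring

lemma rotL_mod (n b x y : ℕ) (h : x % n = y % n) : rotL n b x = rotL n b y := by
  simp [rotL, h]

lemma mod_add_step (n b r : ℕ) (hb : b < n) :
    (r + b) % n = if n ≤ r % n + b then r % n + b - n else r % n + b := by
  have h1 : r % n < n := Nat.mod_lt _ (by omega)
  rw [Nat.add_mod, Nat.mod_eq_of_lt hb]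
  split_ifs with h
  · rw [Nat.mod_eq_sub_mod h, Nat.mod_eq_of_lt (by omega)]
  · exact Nat.mod_eq_of_lt (by omega)

lemma div_step (n b r : ℕ) (hb : b < n) :
    ((r + b) / n ≠ r / n) ↔ n ≤ r % n + b := by
  rw [Nat.add_div (by omega : 0 < n), Nat.div_eq_of_lt hb, Nat.mod_eq_of_lt hb]
  split_ifs with h <;> simp [h]

lemma rotS_lex (n b : ℕ) (hb : b < n) (m : ℕ) : ∀ r r' m' : ℕ, r % n < r' % n →
    n ∣ r' + m' * b → List.Lex (· < ·) (rotS n b r m) (rotS n b r' m') := by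
  induction m with
  | zero =>
    intro r r' m' h hd
    cases m' with
    | zero => simp at hd; have := Nat.mod_eq_zero_of_dvd hd; omega
    | succ m' => rw [rotS_succ]; simp only [rotS, List.range_zero, List.map_nil]; exact List.Lex.nil
  | succ m ih =>
    intro r r' m' h hd
    cases m' with
    | zero => simp at hd; have := Nat.mod_eq_zero_of_dvd hd; omega
    | succ m' =>
      rw [rotS_succ, rotS_succ]
      have e1 := mod_add_step n b r hb
      have e2 := mod_add_step n b r' hb
      have hd' : n ∣ (r' + b) + m' * b := by
        have : (r' + b) + m' * b = r' + (m'+1) * b := by ring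
        rwa [this]
      by_cases h1 : n ≤ r % n + b
      · have h2 : n ≤ r' % n + b := by omega
        rw [if_pos h1] at e1
        rw [if_pos h2] at e2
        have : rotL n b r = rotL n b r' := by simp [rotL, h1, h2]
        rw [this]
        exact List.Lex.cons (ih _ _ _ (by omega) hd')
      · rw [if_neg h1] at e1
        by_cases h2 : n ≤ r' % n + b
        · have t1 : rotL n b r = false := by simp [rotL]; omega
          have t2 : rotL n b r' = true := by simp [rotL, h2]
          rw [t1, t2]
          exact List.Lex.rel (by decide)
        · rw [if_neg h2] at e2
          have : rotL n b r = rotL n b r' := by simp [rotL, h1, h2]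
          rw [this]
          exact List.Lex.cons (ih _ _ _ (by omega) hd')

lemma lower_eq_s16 (a b : ℕ) (ha : 0 < a) : lowerChristoffel a b = rotS (a+b) b 0 (a+b) := by
  unfold lowerChristoffel rotS
  apply List.map_congr_left
  intro i _
  rw [rotL, decide_eq_decide, ← div_step _ _ _ (by omega), zero_add, add_mul, one_mul]

lemma upper_eq (a b : ℕ) (ha : 0 < a) :
    upperChristoffel a b = rotS (a+b) b (a+b-1) (a+b) := by
  unfold upperChristoffel rotS
  apply List.map_congr_left
  intro i _
  rw [rotL, decide_eq_decide, ← div_step _ _ _ (by omega)]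
  have e1 : (i+1) * b + (a+b) - 1 = a + b - 1 + i * b + b := by
    rw [add_mul]; omega
  have e2 : i * b + (a+b) - 1 = a + b - 1 + i * b := by omega
  rw [e1, e2]

lemma rotS_length (n b r m : ℕ) : (rotS n b r m).length = m := by simp [rotS]

lemma rotS_getElem (n b r m i : ℕ) (h : i < (rotS n b r m).length) :
    (rotS n b r m)[i] = rotL n b (r + i * b) := by simp [rotS]

lemma rotS_drop (n b r m i : ℕ) :
    (rotS n b r m).drop i = rotS n b (r + i * b) (m - i) := by
  apply List.ext_getElem
  · simp [rotS]
  · intro j h1 h2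
    rw [List.getElem_drop, rotS_getElem, rotS_getElem]
    congr 1; ring

lemma rotS_take (n b r m i : ℕ) (h : i ≤ m) :
    (rotS n b r m).take i = rotS n b r i := by
  apply List.ext_getElem
  · simp [rotS, h]
  · intro j h1 h2
    rw [List.getElem_take, rotS_getElem, rotS_getElem]

/-- `L (x)` and `L (x-1)` agree unless `x = 0` or `x = -b`. -/
lemma rotL_pred (n b x : ℕ) (hb0 : 0 < b) (hb : b < n) (h0 : ¬ n ∣ x) (h1 : ¬ n ∣ x + b) :
    rotL n b x = rotL n b (n - 1 + x) := by
  have e := mod_add_step n (n-1) x (by omega)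
  have e2 := mod_add_step n b x hb
  have hx : x % n < n := Nat.mod_lt _ (by omega)
  rw [Nat.dvd_iff_mod_eq_zero] at h0 h1
  rw [add_comm] at e
  simp only [rotL, e, decide_eq_decide]
  split_ifs at e2 e ⊢ <;> omega

lemma rotL_refl (n b x y : ℕ) (hb0 : 0 < b) (hb : b < n) (h : n ∣ x + y + b) :
    rotL n b y = rotL n b (n - 1 + x) := by
  have e := mod_add_step n (n-1) x (by omega)
  have e2 := mod_add_step n b (x+y) hb
  have e3 := mod_add_step n (y % n) x (Nat.mod_lt _ (by omega))
  have hx : x % n < n := Nat.mod_lt _ (by omega)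
  have hy : y % n < n := Nat.mod_lt _ (by omega)
  rw [Nat.add_mod_mod] at e3
  rw [Nat.dvd_iff_mod_eq_zero] at h
  rw [add_comm] at e
  simp only [rotL, e, decide_eq_decide]
  split_ifs at e2 e3 e ⊢ <;> omega

lemma reverse_lower (n b : ℕ) (hb0 : 0 < b) (hb : b < n) :
    (rotS n b 0 n).reverse = rotS n b (n-1) n := by
  apply List.ext_getElem
  · simp [rotS]
  · intro i h1 h2
    rw [rotS_length] at h2
    rw [List.getElem_reverse, rotS_getElem, rotS_getElem]
    apply rotL_refl _ _ _ _ hb0 hb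
    rw [rotS_length]
    obtain ⟨d, rfl⟩ : ∃ d, n = i + 1 + d := ⟨n - (i+1), by omega⟩
    have : i + 1 + d - 1 - i = d := by omega
    rw [this]
    exact ⟨b, by ring⟩

lemma main_eq (n b k : ℕ) (hb0 : 0 < b) (hb : b < n) (hc : Nat.Coprime n b) (hk : k < n)
    (hkb : (k * b) % n = 1) :
    ∃ w, (rotS n b 0 k ++ rotS n b 0 k ++ (rotS n b (k*b) (n-k) ++ rotS n b (k*b) (n-k))) =
      false :: w ++ [true] ∧ true :: w ++ [false] = rotS n b (n-1) n ++ rotS n b (n-1) n := by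
  have hk0 : 0 < k := by
    rcases Nat.eq_zero_or_pos k with h | h
    · subst h; simp at hkb
    · exact h
  refine ⟨rotS n b (n-1+b) (2*n-2), ?_, ?_⟩
  · apply List.ext_getElem
    · simp [rotS]; omega
    · intro i h1 h2
      simp only [List.length_append, rotS_length] at h1
      have key1 : rotL n b (i * b) = if i = 0 then false else if i = 2*n-1 then true else
          if i = n then false else if i = n - 1 then true else rotL n b (n-1+i*b) := by
        split_ifs with g1 g2 g3 g4
        · subst g1; simp [rotL, hb]
        · have : n ∣ i * b + b := ⟨2*b, by subst g2; obtain ⟨d, rfl⟩ : ∃ d, n = d + 1 := ⟨n-1, by omega⟩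
                                           rw [show 2*(d+1)-1 = 2*d+1 by omega]; ring⟩
          rw [Nat.dvd_iff_mod_eq_zero, mod_add_step _ _ _ hb] at this
          simp only [rotL, decide_eq_true_eq]
          split_ifs at this <;> omega
        · subst g3; simp [rotL, hb]
        · have : n ∣ i * b + b := ⟨b, by subst g4; obtain ⟨d, rfl⟩ : ∃ d, n = d + 1 := ⟨n-1, by omega⟩
                                         simp; ring⟩
          rw [Nat.dvd_iff_mod_eq_zero, mod_add_step _ _ _ hb] at this
          simp only [rotL, decide_eq_true_eq]
          split_ifs at this <;> omega
        · apply rotL_pred _ _ _ hb0 hb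
          · intro h
            obtain ⟨q, hq⟩ := hc.dvd_of_dvd_mul_right h
            rcases q with _ | _ | q
            · omega
            · omega
            · have : n * (q+1+1) = n*q+2*n := by ring
              omega
          · intro h
            have h' : n ∣ (i+1) * b := by rwa [add_mul, one_mul]
            obtain ⟨q, hq⟩ := hc.dvd_of_dvd_mul_right h'
            rcases q with _ | _ | _ | q
            · omega
            · omega
            · omega
            · have : n * (q+1+1+1) = n*q+3*n := by ring
              omega
      have keyR : (false :: rotS n b (n-1+b) (2*n-2) ++ [true])[i] =
          if i = 0 then false else if i = 2*n-1 then true else rotL n b (n-1+i*b) := by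
        split_ifs with g1 g2
        · subst g1; simp
        · rw [List.getElem_append_right (by simp [rotS]; omega)]; simp
        · rw [List.getElem_append_left (by simp [rotS]; omega)]
          rw [List.getElem_cons, dif_neg g1, rotS_getElem]
          obtain ⟨j, rfl⟩ : ∃ j, i = j+1 := ⟨i-1, by omega⟩
          congr 1; simp; ring
      rw [keyR]
      -- shift relation
      have hshift : ∀ x, rotL n b x = rotL n b (n - 1 + (x + k * b)) := by
        intro x
        apply rotL_mod
        have : n - 1 + (x + k*b) = x + n * (k*b/n + 1) := by
          have := Nat.div_add_mod (k*b) n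
          rw [hkb] at this
          rw [mul_add]; omega
        rw [this, Nat.add_mul_mod_self_left]
      rw [List.getElem_append]
      simp only [List.length_append, rotS_length]
      split_ifs with c1 c2 c3 c4
      · subst c2; rw [List.getElem_append_left (by simp [rotS]; omega), rotS_getElem]
        simp [rotL, hb]
      · omega
      · rw [List.getElem_append]
        simp only [rotS_length]
        split_ifs with c4
        · rw [rotS_getElem, zero_add, key1, if_neg c2, if_neg c3, if_neg (by omega)]
          split_ifs with c5
          · -- i = n - 1 < k impossible
            omega
          · rfl
        · rw [rotS_getElem, hshift, zero_add, ← add_mul]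
          congr 3; omega
      · omega
      · rw [List.getElem_append_right (by simp [rotS]; omega), rotS_getElem]
        simp only [rotS_length]
        have : rotL n b (k * b + (i - (k+k) - (n-k)) * b) = rotL n b (i*b) := by
          apply rotL_mod
          rw [← add_mul]
          have : i = (k + (i - (k+k) - (n-k))) + n := by omega
          conv_rhs => rw [this, add_mul, Nat.add_mul_mod_self_left]
        rw [this, key1, if_neg (by omega), if_pos (by omega)]
      · rw [List.getElem_append]
        simp only [rotS_length]
        split_ifs with c5
        · rw [rotS_getElem, hshift, ← add_mul, ← add_mul]
          congr 3; omega
        · rw [rotS_getElem]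
          have : rotL n b (k * b + (i - (k+k) - (n-k)) * b) = rotL n b (i*b) := by
            apply rotL_mod
            rw [← add_mul]
            have : i = (k + (i - (k+k) - (n-k))) + n := by omega
            conv_rhs => rw [this, add_mul, Nat.add_mul_mod_self_left]
          rw [this, key1, if_neg (by omega), if_neg (by omega), if_neg (by omega), if_neg (by omega)]
  · apply List.ext_getElem
    · simp [rotS]; omega
    · intro i h1 h2
      simp only [List.length_append, rotS_length] at h2
      have hR : (rotS n b (n-1) n ++ rotS n b (n-1) n)[i] = rotL n b (n-1+i*b) := by
        rw [List.getElem_append]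
        simp only [rotS_length]
        split_ifs with c
        · rw [rotS_getElem]
        · rw [rotS_getElem]
          apply rotL_mod
          have : i = (i - n) + n := by omega
          conv_rhs => rw [this, add_mul, ← add_assoc, Nat.add_mul_mod_self_left]
      rw [hR, List.getElem_append]
      simp only [List.length_cons, rotS_length]
      split_ifs with c
      · rw [List.getElem_cons]
        split_ifs with g
        · subst g
          simp only [rotL, zero_mul, add_zero]
          rw [Nat.mod_eq_of_lt (by omega)]
          symm; rw [decide_eq_true_eq]; omega
        · rw [rotS_getElem]
          obtain ⟨j, rfl⟩ : ∃ j, i = j+1 := ⟨i-1, by omega⟩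
          congr 1; simp; ring
      · have hi : i = 2*n-1 := by omega
        simp only [List.getElem_singleton]
        have : n - 1 + i * b = (n - 1 - b) + n * (2*b) := by
          subst hi
          obtain ⟨d, rfl⟩ : ∃ d, n = b + 1 + d := ⟨n - (b+1), by omega⟩
          rw [show 2*(b+1+d)-1 = 2*b+2*d+1 by omega, show b+1+d-1-b = d by omega,
            show b+1+d-1=b+d by omega]
          ring
        rw [this, rotL, Nat.add_mul_mod_self_left, Nat.mod_eq_of_lt (by omega)]
        symm; rw [decide_eq_false_iff_not]; omega

lemma suffix_lex (n b k i : ℕ) (hb0 : 0 < b) (hb : b < n) (hc : Nat.Coprime n b)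
    (hi0 : 0 < i) (hi : i < n) (hk : k < n) (hkb : (k * b) % n = 1) (hne : i ≠ k) :
    List.Lex (· < ·) (rotS n b (k*b) (n-k)) (rotS n b (i*b) (n-i)) := by
  apply rotS_lex n b hb
  · rw [hkb]
    have h0 : (i*b) % n ≠ 0 := by
      intro h
      have := Nat.le_of_dvd hi0 (hc.dvd_of_dvd_mul_right (Nat.dvd_of_mod_eq_zero h))
      omega
    have h1 : (i*b) % n ≠ 1 := by
      intro h
      have h' : i * b ≡ k * b [MOD n] := by rw [Nat.ModEq, h, hkb]
      have := Nat.ModEq.cancel_right_of_coprime hc h'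
      rw [Nat.ModEq, Nat.mod_eq_of_lt hi, Nat.mod_eq_of_lt hk] at this
      exact hne this
    omega
  · rw [← add_mul]
    exact ⟨b, by congr 1; omega⟩

lemma blex_asymm {u v : List Bool} (h : List.Lex (· < ·) u v) (h' : List.Lex (· < ·) v u) : False :=
  absurd (show v < u from h') (lt_asymm (show u < v from h))

lemma stdFact_iff (n b k : ℕ) (hb0 : 0 < b) (hb : b < n) (hc : Nat.Coprime n b) (hk : k < n)
    (hkb : (k * b) % n = 1) (u v : List Bool) :
    StdFact (rotS n b 0 n) u v ↔ u = rotS n b 0 k ∧ v = rotS n b (k*b) (n-k) := by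
  have hk0 : 0 < k := by
    rcases Nat.eq_zero_or_pos k with h | h
    · subst h; simp at hkb
    · exact h
  have hsplit : rotS n b 0 n = rotS n b 0 k ++ rotS n b (k*b) (n-k) := by
    have := List.take_append_drop k (rotS n b 0 n)
    rw [rotS_take _ _ _ _ _ hk.le, rotS_drop, zero_add] at this
    exact this.symm
  have hsuf : ∀ p s, rotS n b 0 n = p ++ s → s = rotS n b (p.length*b) (n-p.length) := by
    intro p s h
    have := rotS_drop n b 0 n p.length
    rw [h, zero_add] at this
    simpa using this
  constructor
  · rintro ⟨h, hu, hv, hmin⟩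
    have hl := congrArg List.length h
    rw [rotS_length, List.length_append] at hl
    have hu' := List.length_pos_of_ne_nil hu
    have hv' := List.length_pos_of_ne_nil hv
    have hvs := hsuf u v h
    have hlen : u.length = k := by
      by_contra hne
      have hlt := suffix_lex n b k u.length hb0 hb hc hu' (by omega) hk hkb hne
      rw [← hvs] at hlt
      have g1 : rotS n b (k*b) (n-k) ≠ [] := by
        intro h; have := congrArg List.length h; simp only [rotS_length, List.length_nil] at this; omega
      have g2 : rotS n b (k*b) (n-k) ≠ rotS n b 0 n := by
        intro h; have := congrArg List.length h; simp only [rotS_length] at this; omega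
      rcases hmin (rotS n b (k*b) (n-k)) g1 g2 ⟨_, hsplit.symm⟩ with h1 | h1
      · rw [← h1] at hlt; exact blex_asymm hlt hlt
      · exact blex_asymm hlt h1
    rw [hlen] at hvs
    refine ⟨?_, hvs⟩
    have := congrArg (List.take k) h
    rw [rotS_take _ _ _ _ _ hk.le, ← hlen] at this
    rw [← hlen]
    simpa using this.symm
  · rintro ⟨rfl, rfl⟩
    refine ⟨hsplit, ?_, ?_, ?_⟩
    · intro h; have := congrArg List.length h; simp [rotS] at this; omega
    · intro h; have := congrArg List.length h; simp [rotS] at this; omega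
    · rintro s hs hsw ⟨p, hp⟩
      have hl := congrArg List.length hp
      rw [rotS_length, List.length_append] at hl
      have hs' := List.length_pos_of_ne_nil hs
      have hp0 : 0 < p.length := by
        apply List.length_pos_of_ne_nil
        rintro rfl
        exact hsw (by simpa using hp)
      have e := hsuf p s hp.symm
      by_cases hpk : p.length = k
      · left; rw [e, hpk]
      · right; rw [e]
        exact suffix_lex n b k p.length hb0 hb hc hp0 (by omega) hk hkb hpk

lemma setup (a b : ℕ) (hc : Nat.Coprime a b) (h : 2 ≤ a + b) :
    0 < a ∧ 0 < b ∧ Nat.Coprime (a+b) b ∧ ∃ k < a + b, (k * b) % (a+b) = 1 := by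
  have ha : 0 < a := by
    rcases Nat.eq_zero_or_pos a with h0 | h0
    · subst h0; simp at hc; omega
    · exact h0
  have hb : 0 < b := by
    rcases Nat.eq_zero_or_pos b with h0 | h0
    · subst h0; simp at hc; omega
    · exact h0
  have hc' : Nat.Coprime (a+b) b := by simpa using hc
  obtain ⟨m, hm, hm'⟩ := Nat.exists_mul_mod_eq_one_of_coprime hc'.symm (by omega : 1 < a+b)
  exact ⟨ha, hb, hc', m, hm, by rwa [mul_comm]⟩

lemma swap_unique {x y x' y' : Bool} {w w' : List Bool}
    (h : x :: w ++ [y] = x' :: w' ++ [y']) : x = x' ∧ y = y' ∧ w = w' := by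
  simp only [List.cons_append, List.cons.injEq] at h
  obtain ⟨h1, h2⟩ := h
  have := List.append_inj' h2 rfl
  exact ⟨h1, by simpa using this.2, this.1⟩

/-- The words `u²v²` and their reversals, where `uv` is the standard
factorization of a primitive lower Christoffel word of length ≥ 2, are exactly the words
`y·w·x` with `{x,y} = {0,1}` and `x·w·y` the square of a primitive Christoffel word. -/
theorem stmt16 :
    {z : List Bool | ∃ w u v : List Bool,
        (∃ a b : ℕ, Nat.Coprime a b ∧ w = lowerChristoffel a b) ∧ 2 ≤ w.length ∧
        StdFact w u v ∧
        (z = u ++ u ++ (v ++ v) ∨ z = (u ++ u ++ (v ++ v)).reverse)} =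
    {z : List Bool | ∃ (x y : Bool) (w c : List Bool), x ≠ y ∧
        IsPrimitiveChristoffel c ∧ z = y :: w ++ [x] ∧ x :: w ++ [y] = c ++ c} := by
  ext z
  simp only [Set.mem_ofPred_eq]
  constructor
  · rintro ⟨w, u, v, ⟨a, b, hc, rfl⟩, hl, hstd, hz⟩
    have hn : 2 ≤ a + b := by simpa [lowerChristoffel] using hl
    obtain ⟨ha, hb, hc', k, hk, hkb⟩ := setup a b hc hn
    rw [lower_eq_s16 a b ha, stdFact_iff _ _ k hb (by omega) hc' hk hkb] at hstd
    obtain ⟨rfl, rfl⟩ := hstd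
    obtain ⟨w, h1, h2⟩ := main_eq _ _ k hb (by omega) hc' hk hkb
    rw [h1] at hz
    rcases hz with hz | hz
    · exact ⟨true, false, w, upperChristoffel a b, by decide, ⟨a, b, hc, Or.inr rfl⟩, hz,
        by rw [upper_eq a b ha]; exact h2⟩
    · refine ⟨false, true, w.reverse, lowerChristoffel a b, by decide, ⟨a, b, hc, Or.inl rfl⟩,
        by simpa using hz, ?_⟩
      have := congrArg List.reverse h2
      rw [← reverse_lower _ _ hb (by omega)] at this
      rw [lower_eq_s16 a b ha]
      simpa using this
  · rintro ⟨x, y, w, c, hxy, ⟨a, b, hc, hcc⟩, hz, he⟩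
    have hlen : c.length = a + b := by
      rcases hcc with rfl | rfl <;> simp [lowerChristoffel, upperChristoffel]
    have hn : 2 ≤ a + b := by
      by_contra hlt
      have hl := congrArg List.length he
      simp only [List.length_append, List.length_cons, List.length_nil] at hl
      have h1 : c.length = 1 := by omega
      obtain ⟨l, rfl⟩ := List.length_eq_one_iff.mp h1
      have hw : w = [] := List.length_eq_zero_iff.mp (by omega)
      subst hw
      simp at he
      exact hxy (he.1.trans he.2.symm)
    obtain ⟨ha, hb, hc', k, hk, hkb⟩ := setup a b hc hn
    obtain ⟨w', h1, h2⟩ := main_eq _ _ k hb (by omega) hc' hk hkb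
    refine ⟨lowerChristoffel a b, rotS (a+b) b 0 k, rotS (a+b) b (k*b) (a+b-k), ⟨a, b, hc, rfl⟩, by simpa [lowerChristoffel] using hn,
      by rw [lower_eq_s16 a b ha]; exact (stdFact_iff _ _ k hb (by omega) hc' hk hkb _ _).2 ⟨rfl, rfl⟩, ?_⟩
    rw [h1]
    rcases hcc with rfl | rfl
    · right
      rw [lower_eq_s16 a b ha] at he
      have := congrArg List.reverse h2
      rw [← reverse_lower _ _ hb (by omega)] at this
      have h3 : false :: w'.reverse ++ [true] = rotS (a+b) b 0 (a+b) ++ rotS (a+b) b 0 (a+b) := by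
        simpa using this
      obtain ⟨rfl, rfl, rfl⟩ := swap_unique (he.trans h3.symm)
      simpa using hz
    · left
      rw [upper_eq a b ha] at he
      obtain ⟨rfl, rfl, rfl⟩ := swap_unique (he.trans h2.symm)
      exact hz
end
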